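/- arXiv:math/0703203 — 8 statements merged into one kernel-verified Lean document; each statement's English description precedes it below -/
import Mathlib

section
/- Let R be a ring (not necessarily commutative), m ≥ 1, and let A = (a_{ij}) be a right-quantum m×m matrix over R. Let p = (p₁,…,p_m) and r = (r₁,…,r_m) be nonnegative integer vectors with p₁+⋯+p_m = r₁+⋯+r_m = n, and let π and σ be permutations of {1,…,m}. Then Σ_{α ∈ 𝒪^π(p;r)} α = Σ_{α ∈ 𝒫^σ(p;r)} α, where each sequence α is evaluated in R as the product of its steps. -/
/-!
Statement 0: the main theorem (part 1) of the paper: for a right-quantum matrix `A`,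
the sum over ordered sequences of type `(p;r)` with respect to `π` equals the sum over
path sequences of type `(p;r)` with respect to `σ`.
-/

variable {R : Type*} [Ring R] {m : ℕ}

/-- A sequence (list of steps `(i,j)`) has type `(p;r)` if `p h` counts steps with starting
height `h` and `r h` counts steps with ending height `h`. -/
def HasType (p r : Fin m → ℕ) (α : List (Fin m × Fin m)) : Prop :=
  (∀ h, (α.map Prod.fst).count h = p h) ∧ (∀ h, (α.map Prod.snd).count h = r h)

/-- An ordered sequence with respect to `π`: the `π`-preimages of the starting heights are
weakly increasing. -/
def IsOrderedSeq (π : Equiv.Perm (Fin m)) (α : List (Fin m × Fin m)) : Prop :=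
  α.Chain' fun s t => π.symm s.1 ≤ π.symm t.1

/-- A (nonempty) lattice path: each step starts at the ending point of the previous step. -/
def IsLatticePath (α : List (Fin m × Fin m)) : Prop :=
  α ≠ [] ∧ α.Chain' fun s t => s.2 = t.1

/-- A path sequence with respect to `σ`: a concatenation of lattice paths such that for each
constituent path, the `σ`-preimage of its starting height is minimal among the starting heights
of all steps from that point on, and its ending height does not occur as a starting height of
any later step. -/
def IsPathSeq (σ : Equiv.Perm (Fin m)) (α : List (Fin m × Fin m)) : Prop :=
  ∃ L : List (List (Fin m × Fin m)), α = L.flatten ∧ (∀ P ∈ L, IsLatticePath P) ∧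
    ∀ u : Fin L.length,
      (∀ f ∈ (L.get u).head?, ∀ t ∈ (L.drop (u : ℕ)).flatten, σ.symm f.1 ≤ σ.symm t.1) ∧
      (∀ g ∈ (L.get u).getLast?, ∀ t ∈ (L.drop ((u : ℕ) + 1)).flatten, t.1 ≠ g.2)

/-- Evaluation of a sequence in `R`: the product of its steps `a_{i₁j₁} a_{i₂j₂} ⋯ a_{iₙjₙ}`. -/
def evalSeq (A : Matrix (Fin m) (Fin m) R) (α : List (Fin m × Fin m)) : R :=
  (α.map fun s => A s.1 s.2).prod

/-- A matrix is right-quantum if `a_{jk} a_{ik} = a_{ik} a_{jk}` and, for `k ≠ l`,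
`a_{ik} a_{jl} − a_{jk} a_{il} = a_{jl} a_{ik} − a_{il} a_{jk}`. -/
def RightQuantum (A : Matrix (Fin m) (Fin m) R) : Prop :=
  (∀ i j k, A j k * A i k = A i k * A j k) ∧
  (∀ i j k l, k ≠ l → A i k * A j l - A j k * A i l = A j l * A i k - A i l * A j k)


open Classical in
theorem rq_sum_valid {B : Type*} [Ring B] (c : Fin m × Fin m → B)
    (hc : ∀ i i', Commute (∑ j, c (i, j)) (∑ j, c (i', j)))
    (V : Option (Fin m) → List (Fin m × Fin m) → Prop)
    (hV0 : ∀ h, V h [])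
    (hV : ∀ h (S : Multiset (Fin m)), S ≠ 0 → ∃ i ∈ S, ∀ s α,
      (((s :: α).map Prod.fst : List (Fin m)) : Multiset (Fin m)) = S →
        (V h (s :: α) ↔ s.1 = i ∧ V (some s.2) α)) :
    ∀ (l : List (Fin m)) (h : Option (Fin m)),
      ∑ α ∈ (List.finite_length_eq (Fin m × Fin m) l.length).toFinset.filter
        (fun α => ((α.map Prod.fst : List (Fin m)) : Multiset (Fin m)) = l ∧ V h α),
        (α.map c).prod = (l.map fun i => ∑ j, c (i, j)).prod := by
  intro l
  induction hn : l.length generalizing l with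
  | zero =>
    intro h
    have hl : l = [] := List.length_eq_zero_iff.mp hn
    subst hl
    rw [Finset.sum_eq_single []]
    · simp
    · intro b hb hb'
      simp at hb
      exact absurd hb.1 hb'
    · intro hh
      exfalso
      apply hh
      simp [hV0]
  | succ n ih =>
    intro h
    obtain ⟨i, hi, hV'⟩ := hV h (l : Multiset (Fin m)) (by
      intro h0
      have := congrArg Multiset.card h0
      simp [hn] at this)
    have hi' : i ∈ l := by simpa using hi
    have hp : l.Perm (i :: l.erase i) := List.perm_cons_erase hi'
    have hlen : (l.erase i).length = n := by
      rw [List.length_erase_of_mem hi', hn]; rfl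
    have hprod : (l.map fun i => ∑ j, c (i, j)).prod
        = ((i :: l.erase i).map fun i => ∑ j, c (i, j)).prod := by
      apply List.Perm.prod_eq' (hp.map _)
      rw [List.pairwise_map]
      exact List.pairwise_of_forall (fun a b => hc a b)
    rw [hprod, List.map_cons, List.prod_cons]
    have hset : (List.finite_length_eq (Fin m × Fin m) (n+1)).toFinset.filter
        (fun α => ((α.map Prod.fst : List (Fin m)) : Multiset (Fin m)) = l ∧ V h α) =
        Finset.univ.biUnion (fun j : Fin m =>
          ((List.finite_length_eq (Fin m × Fin m) n).toFinset.filter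
            (fun α => ((α.map Prod.fst : List (Fin m)) : Multiset (Fin m)) = (l.erase i : List (Fin m))
              ∧ V (some j) α)).image (fun α => (i, j) :: α)) := by
      ext α
      simp only [Finset.mem_filter, Set.Finite.mem_toFinset, Set.mem_setOf_eq, Finset.mem_biUnion,
        Finset.mem_univ, true_and, Finset.mem_image]
      constructor
      · rintro ⟨h1, h2, h3⟩
        cases α with
        | nil => simp at h1
        | cons s α =>
          obtain ⟨h4, h5⟩ := (hV' s α h2).1 h3
          obtain ⟨a, b⟩ := s
          simp only at h4 h5
          subst h4
          refine ⟨b, α, ⟨by simpa using h1, ?_, h5⟩, rfl⟩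
          rw [Multiset.coe_eq_coe] at h2 ⊢
          rw [List.map_cons] at h2
          exact (List.perm_cons a).1 (h2.trans hp)
      · rintro ⟨j, β, ⟨h1, h2, h3⟩, rfl⟩
        have h4 : ((((i, j) :: β).map Prod.fst : List (Fin m)) : Multiset (Fin m)) = l := by
          rw [Multiset.coe_eq_coe] at h2 ⊢
          rw [List.map_cons]
          exact ((List.perm_cons i).2 h2).trans hp.symm
        exact ⟨by simp [h1], h4, (hV' _ _ h4).2 ⟨rfl, h3⟩⟩
    rw [hset, Finset.sum_biUnion]
    · rw [Finset.sum_mul]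
      apply Finset.sum_congr rfl
      intro j _
      rw [Finset.sum_image (by intro a _ b _ hab; simpa using hab)]
      simp only [List.map_cons, List.prod_cons]
      rw [← Finset.mul_sum, ih (l.erase i) hlen (some j)]
    · intro j _ j' _ hjj
      rw [Function.onFun, Finset.disjoint_left]
      intro α h1 h2
      simp only [Finset.mem_image] at h1 h2
      obtain ⟨β, _, rfl⟩ := h1
      obtain ⟨γ, _, h3⟩ := h2
      simp at h3
      exact hjj h3.1.symm

noncomputable def rqMon (A : Matrix (Fin m) (Fin m) R) (s : Fin m × Fin m) :
    AddMonoidAlgebra R (Fin m →₀ ℕ) :=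
  AddMonoidAlgebra.single (Finsupp.single s.2 1) (A s.1 s.2)

theorem rqMon_commute (A : Matrix (Fin m) (Fin m) R) (hA : RightQuantum A) (i i' : Fin m) :
    Commute (∑ j, rqMon A (i, j)) (∑ j, rqMon A (i', j)) := by
  have key : ∀ k l, A i k * A i' l + A i l * A i' k = A i' k * A i l + A i' l * A i k := by
    intro k l
    by_cases hkl : k = l
    · subst hkl
      rw [hA.1 i' i k]
    · have := hA.2 i i' k l hkl
      rw [sub_eq_sub_iff_add_eq_add] at this
      rw [this]; abel
  unfold Commute SemiconjBy
  simp only [Finset.sum_mul_sum, rqMon, AddMonoidAlgebra.single_mul_single]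
  rw [← sub_eq_zero, ← Finset.sum_sub_distrib]
  simp only [← Finset.sum_sub_distrib]
  rw [← Finset.sum_product']
  have e : ∀ k l : Fin m, AddMonoidAlgebra.single (Finsupp.single k 1 + Finsupp.single l 1)
      (A i k * A i' l) - AddMonoidAlgebra.single (Finsupp.single k 1 + Finsupp.single l 1)
      (A i' k * A i l) = (AddMonoidAlgebra.single (Finsupp.single k 1 + Finsupp.single l 1)
      (A i k * A i' l - A i' k * A i l) : AddMonoidAlgebra R (Fin m →₀ ℕ)) := by
    intro k l
    rw [AddMonoidAlgebra.single_sub]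
  simp only [e]
  refine Finset.sum_involution (fun x _ => (x.2, x.1)) ?_ ?_ ?_ ?_
  · rintro ⟨k, l⟩ _
    simp only
    rw [add_comm (Finsupp.single l 1), ← AddMonoidAlgebra.single_add]
    have : A i k * A i' l - A i' k * A i l + (A i l * A i' k - A i' l * A i k) = 0 := by
      have h := sub_eq_zero.2 (key k l)
      rw [← h]; abel
    rw [this, AddMonoidAlgebra.single_zero]
  · rintro ⟨k, l⟩ _ h1 h2
    simp only [Prod.mk.injEq] at h2
    obtain ⟨rfl, -⟩ := h2
    apply h1
    simp only
    rw [hA.1 i' i, sub_self, AddMonoidAlgebra.single_zero]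
  · intros; simp
  · intros; rfl

theorem rqMon_prod (A : Matrix (Fin m) (Fin m) R) (α : List (Fin m × Fin m)) :
    (α.map (rqMon A)).prod =
      AddMonoidAlgebra.single (α.map (fun s => Finsupp.single s.2 1)).sum (evalSeq A α) := by
  induction α with
  | nil => simp [evalSeq, AddMonoidAlgebra.one_def]
  | cons s α ih =>
    rw [List.map_cons, List.prod_cons, ih, rqMon, AddMonoidAlgebra.single_mul_single]
    simp [evalSeq]

theorem rq_sum_single (α : List (Fin m × Fin m)) (h : Fin m) :
    (α.map (fun s => Finsupp.single s.2 1)).sum h = (α.map Prod.snd).count h := by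
  induction α with
  | nil => simp
  | cons s α ih =>
    simp [List.count_cons, ih, Finsupp.single_apply]
    split_ifs <;> omega

theorem sum_valid_eq_coeff (A : Matrix (Fin m) (Fin m) R) (hA : RightQuantum A)
    (p r : Fin m → ℕ)
    (V : Option (Fin m) → List (Fin m × Fin m) → Prop)
    (hV : (∀ h, V h []) ∧ ∀ h (S : Multiset (Fin m)), S ≠ 0 → ∃ i ∈ S, ∀ s α,
      (((s :: α).map Prod.fst : List (Fin m)) : Multiset (Fin m)) = S →
        (V h (s :: α) ↔ s.1 = i ∧ V (some s.2) α)) (h : Option (Fin m)) :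
    ∑ᶠ α ∈ {α : List (Fin m × Fin m) | HasType p r α ∧ V h α}, evalSeq A α =
    (((∑ i, p i • ({i} : Multiset (Fin m))).toList.map fun i => ∑ j, rqMon A (i, j)).prod).coeff
      (Finsupp.equivFunOnFinite.symm r) := by
  classical
  set l := (∑ i, p i • ({i} : Multiset (Fin m))).toList with hl
  have hlc : ∀ i, l.count i = p i := by
    intro i
    rw [← Multiset.coe_count, hl, Multiset.coe_toList, Multiset.count_sum']
    simp [Multiset.count_singleton]
  rw [← rq_sum_valid (rqMon A) (rqMon_commute A hA) V hV.1 hV.2 l h]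
  have hset : {α : List (Fin m × Fin m) | HasType p r α ∧ V h α} =
      (((List.finite_length_eq (Fin m × Fin m) l.length).toFinset.filter
        (fun α => ((α.map Prod.fst : List (Fin m)) : Multiset (Fin m)) = l ∧ V h α)).filter
        (fun α => (α.map (fun s => Finsupp.single s.2 1)).sum = Finsupp.equivFunOnFinite.symm r) :
        Finset (List (Fin m × Fin m))) := by
    ext α
    simp only [Finset.coe_filter, Finset.mem_filter, Set.Finite.mem_toFinset, Set.mem_setOf_eq,
      HasType, Multiset.coe_eq_coe]
    have e1 : (∀ h, (α.map Prod.fst).count h = p h) ↔ (α.map Prod.fst).Perm l := by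
      rw [List.perm_iff_count]; simp [hlc]
    have e2 : (∀ h, (α.map Prod.snd).count h = r h) ↔
        (α.map (fun s => Finsupp.single s.2 1)).sum = Finsupp.equivFunOnFinite.symm r := by
      rw [Finsupp.ext_iff]; simp [rq_sum_single]
    rw [e1, e2]
    constructor
    · rintro ⟨⟨h1, h2⟩, h3⟩
      exact ⟨⟨by simpa using h1.length_eq, h1, h3⟩, h2⟩
    · rintro ⟨⟨_, h1, h3⟩, h2⟩
      exact ⟨⟨h1, h2⟩, h3⟩
  rw [hset, finsum_mem_coe_finset, Finset.sum_filter]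
  simp only [rqMon_prod, AddMonoidAlgebra.coeff_sum, AddMonoidAlgebra.coeff_single,
    Finsupp.finsetSum_apply, Finsupp.single_apply]

theorem rq_exists_min (π : Equiv.Perm (Fin m)) (S : Multiset (Fin m)) (hS : S ≠ 0) :
    ∃ i ∈ S, ∀ j ∈ S, π.symm i ≤ π.symm j := by
  classical
  obtain ⟨i, hi, h⟩ := Finset.exists_min_image S.toFinset π.symm (by simpa using hS)
  exact ⟨i, by simpa using hi, fun j hj => h j (by simpa using hj)⟩

theorem ordered_strat (π : Equiv.Perm (Fin m)) :
    (∀ h : Option (Fin m), IsOrderedSeq π []) ∧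
    ∀ (h : Option (Fin m)) (S : Multiset (Fin m)), S ≠ 0 → ∃ i ∈ S, ∀ s α,
      (((s :: α).map Prod.fst : List (Fin m)) : Multiset (Fin m)) = S →
        (IsOrderedSeq π (s :: α) ↔ s.1 = i ∧ IsOrderedSeq π α) := by
  refine ⟨fun _ => List.isChain_nil, fun _ S hS => ?_⟩
  obtain ⟨i, hi, hmin⟩ := rq_exists_min π S hS
  refine ⟨i, hi, ?_⟩
  rintro s α rfl
  have e : ∀ β : List (Fin m × Fin m), IsOrderedSeq π β ↔
      β.Pairwise (fun s t => π.symm s.1 ≤ π.symm t.1) := by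
    intro β
    have : IsTrans (Fin m × Fin m) (fun s t => π.symm s.1 ≤ π.symm t.1) :=
      ⟨fun a b c h1 h2 => le_trans h1 h2⟩
    exact List.isChain_iff_pairwise
  rw [e, e, List.pairwise_cons]
  refine and_congr_left fun _ => ?_
  constructor
  · intro h
    have h1 := hmin s.1 (by simp)
    have h2 : π.symm s.1 ≤ π.symm i := by
      rw [Multiset.mem_coe, List.mem_map] at hi
      obtain ⟨t, ht, rfl⟩ := hi
      rcases List.mem_cons.1 ht with rfl | ht
      · exact le_rfl
      · exact h t ht
    exact π.symm.injective (le_antisymm h2 h1)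
  · rintro rfl t ht
    apply hmin
    rw [Multiset.mem_coe, List.mem_map]
    exact ⟨t, List.mem_cons_of_mem _ ht, rfl⟩

/-- The strategy description of path sequences. -/
def PV (σ : Equiv.Perm (Fin m)) : Option (Fin m) → List (Fin m × Fin m) → Prop
  | _, [] => True
  | h, s :: α =>
    ((∃ k ∈ h, k ∈ (s :: α).map Prod.fst ∧ s.1 = k) ∨
      ((∀ k ∈ h, k ∉ (s :: α).map Prod.fst) ∧ ∀ t ∈ s :: α, σ.symm s.1 ≤ σ.symm t.1)) ∧
    PV σ (some s.2) α

theorem pv_strat (σ : Equiv.Perm (Fin m)) :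
    (∀ h : Option (Fin m), PV σ h []) ∧
    ∀ (h : Option (Fin m)) (S : Multiset (Fin m)), S ≠ 0 → ∃ i ∈ S, ∀ s α,
      (((s :: α).map Prod.fst : List (Fin m)) : Multiset (Fin m)) = S →
        (PV σ h (s :: α) ↔ s.1 = i ∧ PV σ (some s.2) α) := by
  refine ⟨fun _ => by simp [PV], fun h S hS => ?_⟩
  by_cases hk : ∃ k ∈ h, k ∈ S
  · obtain ⟨k, hk, hkS⟩ := hk
    refine ⟨k, hkS, ?_⟩
    rintro s α rfl
    rw [Multiset.mem_coe] at hkS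
    rw [PV]
    refine and_congr_left fun _ => ?_
    constructor
    · rintro (⟨k', hk', -, h1⟩ | ⟨h1, -⟩)
      · rw [h1]; exact Option.mem_unique hk' hk
      · exact absurd hkS (h1 k hk)
    · intro h1
      exact Or.inl ⟨k, hk, hkS, h1⟩
  · obtain ⟨i, hi, hmin⟩ := rq_exists_min σ S hS
    refine ⟨i, hi, ?_⟩
    rintro s α rfl
    rw [PV]
    refine and_congr_left fun _ => ?_
    rw [Multiset.mem_coe] at hi
    constructor
    · rintro (⟨k, h1, h2, -⟩ | ⟨-, h2⟩)
      · exact absurd ⟨k, h1, h2⟩ hk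
      · rw [List.mem_map] at hi
        obtain ⟨t, ht, rfl⟩ := hi
        exact σ.symm.injective (le_antisymm (h2 t ht) (hmin s.1 (by simp)))
    · rintro rfl
      refine Or.inr ⟨fun k h1 h2 => hk ⟨k, h1, h2⟩, fun t ht => hmin _ ?_⟩
      rw [Multiset.mem_coe, List.mem_map]
      exact ⟨t, ht, rfl⟩

/-- Recursive form of the conditions on a list of paths. -/
def QS (σ : Equiv.Perm (Fin m)) : List (List (Fin m × Fin m)) → Prop
  | [] => True
  | P :: L => IsLatticePath P ∧
      (∀ f ∈ P.head?, ∀ t ∈ (P :: L).flatten, σ.symm f.1 ≤ σ.symm t.1) ∧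
      (∀ g ∈ P.getLast?, ∀ t ∈ L.flatten, t.1 ≠ g.2) ∧ QS σ L

theorem qs_iff (σ : Equiv.Perm (Fin m)) (L : List (List (Fin m × Fin m))) :
    ((∀ P ∈ L, IsLatticePath P) ∧
    ∀ u : Fin L.length,
      (∀ f ∈ (L.get u).head?, ∀ t ∈ (L.drop (u : ℕ)).flatten, σ.symm f.1 ≤ σ.symm t.1) ∧
      (∀ g ∈ (L.get u).getLast?, ∀ t ∈ (L.drop ((u : ℕ) + 1)).flatten, t.1 ≠ g.2)) ↔ QS σ L := by
  induction L with
  | nil => simp [QS]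
  | cons P L ih =>
    rw [QS, ← ih, List.forall_mem_cons]
    have := Fin.forall_fin_succ (n := L.length) (P := fun u : Fin (P :: L).length =>
      (∀ f ∈ ((P :: L).get u).head?, ∀ t ∈ ((P :: L).drop (u : ℕ)).flatten, σ.symm f.1 ≤ σ.symm t.1) ∧
      (∀ g ∈ ((P :: L).get u).getLast?, ∀ t ∈ ((P :: L).drop ((u : ℕ) + 1)).flatten, t.1 ≠ g.2))
    rw [show (∀ u : Fin (P :: L).length, _) ↔ _ from this]
    simp only [List.get_cons_zero, List.get_cons_succ', Fin.val_zero, Fin.val_succ, List.drop_zero,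
      List.drop_succ_cons, List.length_cons]
    tauto

theorem pv_path (σ : Equiv.Perm (Fin m)) (β : List (Fin m × Fin m)) :
    ∀ (P : List (Fin m × Fin m)) (s : Fin m × Fin m),
      (s :: P).IsChain (fun s t => s.2 = t.1) →
      (∀ g ∈ (s :: P).getLast?, ∀ t ∈ β, t.1 ≠ g.2) →
      (∀ h : Option (Fin m), (∀ k ∈ h, k ∉ β.map Prod.fst) → PV σ h β) →
      PV σ (some s.2) (P ++ β) := by
  intro P
  induction P with
  | nil =>
    intro s _ h2 h3
    apply h3
    intro k hk hk'
    rw [List.mem_map] at hk'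
    obtain ⟨t, ht, rfl⟩ := hk'
    simp at hk
    exact h2 s (by simp) t ht hk.symm
  | cons t P ih =>
    intro s h1 h2 h3
    rw [List.isChain_cons_cons] at h1
    rw [List.cons_append, PV]
    refine ⟨Or.inl ⟨s.2, by simp, by simp [h1.1], h1.1.symm⟩, ih t h1.2 ?_ h3⟩
    intro g hg
    exact h2 g (by rw [List.getLast?_cons_cons]; exact hg)

theorem pv_of_qs (σ : Equiv.Perm (Fin m)) (L : List (List (Fin m × Fin m))) :
    QS σ L → ∀ h : Option (Fin m), (∀ k ∈ h, k ∉ L.flatten.map Prod.fst) → PV σ h L.flatten := by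
  induction L with
  | nil => intros; simp [PV]
  | cons P L ih =>
    rintro ⟨⟨h0, h1⟩, h2, h3, h4⟩ h hh
    cases P with
    | nil => exact absurd rfl h0
    | cons s P =>
      rw [List.flatten_cons, List.cons_append] at hh h2 ⊢
      rw [PV]
      exact ⟨Or.inr ⟨hh, h2 s (by simp)⟩, pv_path σ _ P s h1 h3 (ih h4)⟩

theorem qs_of_pv (σ : Equiv.Perm (Fin m)) (α : List (Fin m × Fin m)) :
    (∀ k, PV σ (some k) α → ∃ P L, α = P ++ L.flatten ∧ QS σ L ∧
      ∀ s : Fin m × Fin m, s.2 = k → (s :: P).IsChain (fun s t => s.2 = t.1) ∧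
        ∀ g ∈ (s :: P).getLast?, ∀ t ∈ L.flatten, t.1 ≠ g.2) ∧
    (PV σ none α → ∃ L, α = L.flatten ∧ QS σ L) := by
  induction α with
  | nil =>
    refine ⟨fun k _ => ⟨[], [], by simp, trivial, by simp⟩, fun _ => ⟨[], by simp, trivial⟩⟩
  | cons s α ih =>
    have step : PV σ (some s.2) α → (∀ t ∈ s :: α, σ.symm s.1 ≤ σ.symm t.1) →
        ∃ L, s :: α = L.flatten ∧ QS σ L := by
      intro h1 h2
      obtain ⟨P, L, rfl, hQ, hs⟩ := ih.1 s.2 h1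
      obtain ⟨c1, c2⟩ := hs s rfl
      refine ⟨(s :: P) :: L, by simp, ⟨by simp, c1⟩, ?_, c2, hQ⟩
      intro f hf
      simp at hf
      subst hf
      simpa using h2
    constructor
    · intro k h
      rw [PV] at h
      obtain ⟨h | ⟨h1, h2⟩, h3⟩ := h
      · obtain ⟨k', hk', -, h4⟩ := h
        simp at hk'
        subst hk'
        obtain ⟨P, L, rfl, hQ, hs⟩ := ih.1 s.2 h3
        obtain ⟨c1, c2⟩ := hs s rfl
        refine ⟨s :: P, L, by simp, hQ, fun s0 hs0 => ⟨?_, ?_⟩⟩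
        · rw [List.isChain_cons_cons]
          exact ⟨hs0.trans h4.symm, c1⟩
        · rw [List.getLast?_cons_cons]
          exact c2
      · obtain ⟨L, hL, hQ⟩ := step h3 h2
        refine ⟨[], L, by simpa using hL, hQ, fun s0 hs0 => ⟨by simp, ?_⟩⟩
        intro g hg t ht heq
        simp at hg
        subst hg
        apply h1 k (by simp)
        rw [List.mem_map]
        exact ⟨t, hL ▸ ht, heq.trans hs0⟩
    · intro h
      rw [PV] at h
      obtain ⟨h | ⟨h1, h2⟩, h3⟩ := h
      · obtain ⟨k', hk', -⟩ := h
        simp at hk'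
      · exact step h3 h2

theorem isPathSeq_iff (σ : Equiv.Perm (Fin m)) (α : List (Fin m × Fin m)) :
    IsPathSeq σ α ↔ PV σ none α := by
  unfold IsPathSeq
  simp only [qs_iff]
  constructor
  · rintro ⟨L, rfl, hQ⟩
    exact pv_of_qs σ L hQ none (by simp)
  · exact (qs_of_pv σ α).2

theorem sum_ordered_eq_sum_pathSeq (hm : 1 ≤ m)
    (A : Matrix (Fin m) (Fin m) R) (hA : RightQuantum A)
    (p r : Fin m → ℕ) (hpr : ∑ i, p i = ∑ i, r i)
    (π σ : Equiv.Perm (Fin m)) :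
    ∑ᶠ α ∈ {α : List (Fin m × Fin m) | HasType p r α ∧ IsOrderedSeq π α}, evalSeq A α =
    ∑ᶠ α ∈ {α : List (Fin m × Fin m) | HasType p r α ∧ IsPathSeq σ α}, evalSeq A α := by
  classical
  rw [sum_valid_eq_coeff A hA p r (fun _ α => IsOrderedSeq π α) (ordered_strat π) none,
    ← sum_valid_eq_coeff A hA p r (PV σ) (pv_strat σ) none]
  simp only [isPathSeq_iff]
end

section
/- Let R be a ring (not necessarily commutative), m ≥ 1, and let A = (a_{ij}) be a right-quantum m×m matrix over R. Suppose the matrix I − A is invertible as a matrix over R, with (two-sided) inverse B. Then for all i, j ∈ {1,…,m}: det(I − A) · B_{ij} = (−1)^{i+j} · det((I − A)^{ji}), where det is the column determinant and (I − A)^{ji} denotes the matrix I − A with its j-th row and i-th column deleted. -/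
/-!
Statement 5: the right-quantum matrix inverse formula:
`det(I − A) · ((I−A)⁻¹)_{ij} = (−1)^{i+j} · det((I − A)^{ji})`, where `det` is the column
determinant and `(I−A)^{ji}` is `I − A` with the `j`-th row and `i`-th column deleted.
-/

variable {R : Type*} [Ring R] {m : ℕ}

/-- The column determinant of a matrix over a (not necessarily commutative) ring:
`∑_π sgn(π) b_{π(1)1} b_{π(2)2} ⋯ b_{π(m)m}`. -/
def cdet {n : ℕ} (B : Matrix (Fin n) (Fin n) R) : R :=
  ∑ π : Equiv.Perm (Fin n),
    (Equiv.Perm.sign π : ℤ) • ((List.finRange n).map fun k => B (π k) k).prod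

/-- The column determinant of the square submatrix of `B` with rows indexed by `S` and columns
indexed by `T` (each taken in increasing order); `0` if `S` and `T` have different sizes. -/
def cdetSub (B : Matrix (Fin m) (Fin m) R) (S T : Finset (Fin m)) : R :=
  if h : S.card = T.card then
    ∑ π : Equiv.Perm (Fin T.card),
      (Equiv.Perm.sign π : ℤ) •
        ((List.finRange T.card).map fun k =>
          B ((S.orderIsoOfFin h (π k) : Fin m)) ((T.orderIsoOfFin rfl k : Fin m))).prod
  else 0


namespace RQ

/-- Levi-Civita symbol on functions. -/
def eps {n : ℕ} (g : Fin n → Fin n) : ℤ := ((1 : Matrix (Fin n) (Fin n) ℤ).submatrix g id).det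

theorem eps_perm {n : ℕ} (g : Fin n → Fin n) (σ : Equiv.Perm (Fin n)) :
    eps (g ∘ σ) = (Equiv.Perm.sign σ : ℤ) * eps g := by
  have := Matrix.det_permute σ ((1 : Matrix (Fin n) (Fin n) ℤ).submatrix g id)
  simpa [eps, Matrix.submatrix_submatrix] using this

theorem eps_id {n : ℕ} : eps (id : Fin n → Fin n) = 1 := by
  simp [eps]

theorem eps_coe {n : ℕ} (σ : Equiv.Perm (Fin n)) : eps σ = (Equiv.Perm.sign σ : ℤ) := by
  have := eps_perm id σ
  simpa [eps_id] using this

theorem eps_eq_zero {n : ℕ} (g : Fin n → Fin n) (hg : ¬ Function.Injective g) : eps g = 0 := by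
  simp only [Function.Injective, not_forall] at hg
  obtain ⟨a, b, hab, hne⟩ := hg
  apply Matrix.det_zero_of_row_eq hne
  ext x
  rw [Matrix.submatrix_apply, Matrix.submatrix_apply, hab]

theorem eps_snoc {n : ℕ} (g : Fin n → Fin (n+1)) (j : Fin (n+1)) :
    eps (Fin.snoc g j : Fin (n+1) → Fin (n+1)) =
      (-1) ^ (n + (j : ℕ)) * ((1 : Matrix (Fin (n+1)) (Fin (n+1)) ℤ).submatrix g j.succAbove).det := by
  rw [eps, Matrix.det_succ_row _ (Fin.last n), Finset.sum_eq_single j]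
  · have : ((1 : Matrix (Fin (n+1)) (Fin (n+1)) ℤ).submatrix (Fin.snoc g j : Fin (n+1) → Fin (n+1)) id).submatrix
        (Fin.last n).succAbove j.succAbove = (1 : Matrix (Fin (n+1)) (Fin (n+1)) ℤ).submatrix g j.succAbove := by
      ext x y
      rw [Matrix.submatrix_apply, Matrix.submatrix_apply, Matrix.submatrix_apply, Fin.succAbove_last,
        Fin.snoc_castSucc (α := fun _ => Fin (n+1))]
      rfl
    rw [this, Matrix.submatrix_apply, Fin.snoc_last (α := fun _ => Fin (n+1)), id, Matrix.one_apply_eq]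
    simp
  · intro b _ hb
    rw [Matrix.submatrix_apply, Fin.snoc_last (α := fun _ => Fin (n+1)), id, Matrix.one_apply_ne hb.symm]
    simp
  · simp

theorem sum_eps_perm {n : ℕ} (w : (Fin n → Fin n) → R) :
    ∑ g : Fin n → Fin n, eps g • w g =
      ∑ π : Equiv.Perm (Fin n), (Equiv.Perm.sign π : ℤ) • w π := by
  symm
  apply Finset.sum_of_injOn (fun π : Equiv.Perm (Fin n) => (π : Fin n → Fin n))
  · intro a _ b _ h
    exact DFunLike.coe_injective h
  · simp
  · intro g _ hg
    rw [eps_eq_zero, zero_smul]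
    intro hi
    apply hg
    have hb : Function.Bijective g := Finite.injective_iff_bijective.1 hi
    exact ⟨Equiv.ofBijective g hb, by simp, rfl⟩
  · intro π _
    rw [eps_coe]

/-- product -/
def pr {n p q : ℕ} (C : Matrix (Fin p) (Fin q) R) (g : Fin n → Fin p) (f : Fin n → Fin q) : R :=
  ((List.finRange n).map fun k => C (g k) (f k)).prod

theorem pr_snoc {n p q : ℕ} (C : Matrix (Fin p) (Fin q) R) (g : Fin n → Fin p) (f : Fin n → Fin q) (a b) :
    pr C (Fin.snoc g a : Fin (n+1) → Fin p) (Fin.snoc f b : Fin (n+1) → Fin q) = pr C g f * C a b := by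
  simp [pr, List.finRange_succ_last, Function.comp_def]

/-- generalized column determinant with columns f -/
def F {n : ℕ} (C : Matrix (Fin n) (Fin n) R) (f : Fin n → Fin n) : R :=
  ∑ g : Fin n → Fin n, eps g • pr C g f

theorem sum_symm {n : ℕ} (w : (Fin n → Fin n) → R) (a b : Fin n) (hab : a ≠ b)
    (hw : ∀ g, w (g ∘ Equiv.swap a b) = w g) : ∑ g : Fin n → Fin n, eps g • w g = 0 := by
  have he : ∀ g : Fin n → Fin n, eps (g ∘ Equiv.swap a b) = - eps g := by
    intro g
    rw [eps_perm, Equiv.Perm.sign_swap hab]; simp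
  refine Finset.sum_involution (fun g _ => g ∘ Equiv.swap a b) ?_ ?_ ?_ ?_
  · intro g _
    rw [he, hw]; simp
  · intro g _ h h2
    apply h
    have h3 := he g
    rw [h2] at h3
    have : eps g = 0 := by omega
    rw [this, zero_smul]
  · simp
  · intro g _
    ext x
    simp

theorem split {n : ℕ} (k : Fin n) : ∃ l1 l2 : List (Fin (n+1)),
    List.finRange (n+1) = l1 ++ k.castSucc :: k.succ :: l2 ∧
    (∀ x ∈ l1, x ≠ k.castSucc ∧ x ≠ k.succ) ∧ (∀ x ∈ l2, x ≠ k.castSucc ∧ x ≠ k.succ) := by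
  have h : List.finRange (n+1) = (List.finRange (n+1)).take k ++ k.castSucc :: k.succ ::
      (List.finRange (n+1)).drop (k+2) := by
    conv_lhs => rw [← List.take_append_drop k (List.finRange (n+1))]
    rw [List.drop_eq_getElem_cons (by simp), List.drop_eq_getElem_cons (by simp)]
    simp [Fin.ext_iff]
  refine ⟨_, _, h, ?_⟩
  have hn := List.nodup_finRange (n+1)
  rw [h] at hn
  generalize (List.finRange (n+1)).take k = l1 at hn
  generalize (List.finRange (n+1)).drop (k+2) = l2 at hn
  rw [List.nodup_append] at hn
  obtain ⟨_, h2, h3⟩ := hn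
  rw [List.nodup_cons, List.nodup_cons] at h2
  simp only [List.mem_cons] at h2 h3
  constructor
  · intro x hx
    exact ⟨h3 x hx _ (Or.inl rfl), h3 x hx _ (Or.inr (Or.inl rfl))⟩
  · intro x hx
    constructor
    · rintro rfl; tauto
    · rintro rfl; tauto

theorem pr_split {n : ℕ} (C : Matrix (Fin (n+1)) (Fin (n+1)) R) (k : Fin n) :
    ∃ P Q : (Fin (n+1) → Fin (n+1)) → (Fin (n+1) → Fin (n+1)) → R,
      (∀ g f, pr C g f = P g f * (C (g k.castSucc) (f k.castSucc) * C (g k.succ) (f k.succ)) * Q g f) ∧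
      (∀ g f, P (g ∘ Equiv.swap k.castSucc k.succ) f = P g f) ∧
      (∀ g f, Q (g ∘ Equiv.swap k.castSucc k.succ) f = Q g f) ∧
      (∀ g f, P g (f ∘ Equiv.swap k.castSucc k.succ) = P g f) ∧
      (∀ g f, Q g (f ∘ Equiv.swap k.castSucc k.succ) = Q g f) := by
  obtain ⟨l1, l2, h, h1, h2⟩ := split k
  refine ⟨fun g f => (l1.map fun k => C (g k) (f k)).prod, fun g f => (l2.map fun k => C (g k) (f k)).prod,
    ?_, ?_, ?_, ?_, ?_⟩
  · intro g f
    simp [pr, h, mul_assoc]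
  all_goals
    intro g f
    dsimp only
    congr 1
    apply List.map_congr_left
    intro x hx
    first
    | simp [Equiv.swap_apply_of_ne_of_ne (h1 x hx).1 (h1 x hx).2]
    | simp [Equiv.swap_apply_of_ne_of_ne (h2 x hx).1 (h2 x hx).2]

theorem F_adj {n : ℕ} {C : Matrix (Fin (n+1)) (Fin (n+1)) R} (hC : RightQuantum C) (k : Fin n)
    (f : Fin (n+1) → Fin (n+1)) : F C (f ∘ Equiv.swap k.castSucc k.succ) = - F C f := by
  obtain ⟨P, Q, h, hP, hQ, hP', hQ'⟩ := pr_split C k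
  rw [eq_neg_iff_add_eq_zero, F, F, ← Finset.sum_add_distrib]
  simp_rw [← smul_add]
  apply sum_symm _ k.castSucc k.succ (by simp [Fin.ext_iff])
  intro g
  simp only [h, hP, hQ, hP', hQ', ← add_mul, ← mul_add]
  congr 2
  simp only [Function.comp, Equiv.swap_apply_left, Equiv.swap_apply_right]
  generalize g k.castSucc = a
  generalize g k.succ = b
  generalize f k.castSucc = u
  generalize f k.succ = v
  by_cases huv : u = v
  · subst huv
    rw [hC.1 a b u]
  · have := hC.2 a b u v huv
    rw [sub_eq_sub_iff_add_eq_add] at this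
    rw [add_comm (C b v * C a u), add_comm (C a v * C b u)] 
    rw [this]; abel

theorem F_eq {n : ℕ} {C : Matrix (Fin (n+1)) (Fin (n+1)) R} (hC : RightQuantum C) (k : Fin n)
    (f : Fin (n+1) → Fin (n+1)) (hf : f k.castSucc = f k.succ) : F C f = 0 := by
  obtain ⟨P, Q, h, hP, hQ, hP', hQ'⟩ := pr_split C k
  apply sum_symm _ k.castSucc k.succ (by simp [Fin.ext_iff])
  intro g
  simp only [h, hP, hQ]
  congr 2
  simp only [Function.comp, Equiv.swap_apply_left, Equiv.swap_apply_right]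
  rw [hf, hC.1]

theorem F_perm {n : ℕ} {C : Matrix (Fin (n+1)) (Fin (n+1)) R} (hC : RightQuantum C)
    (σ : Equiv.Perm (Fin (n+1))) (f : Fin (n+1) → Fin (n+1)) :
    F C (f ∘ σ) = (Equiv.Perm.sign σ : ℤ) • F C f := by
  have hσ : σ ∈ Submonoid.closure (Set.range fun i : Fin n => Equiv.swap i.castSucc i.succ) := by
    rw [Equiv.Perm.mclosure_swap_castSucc_succ]; trivial
  induction hσ using Submonoid.closure_induction generalizing f with
  | mem x hx =>
    obtain ⟨k, rfl⟩ := hx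
    dsimp only
    rw [F_adj hC, Equiv.Perm.sign_swap (by simp [Fin.ext_iff])]
    simp
  | one => simp
  | mul x y _ _ hx hy =>
    rw [Equiv.Perm.coe_mul, ← Function.comp_assoc, hy, hx, smul_smul]
    simp [mul_comm]

theorem F_zero {n : ℕ} {C : Matrix (Fin (n+1)) (Fin (n+1)) R} (hC : RightQuantum C)
    (f : Fin (n+1) → Fin (n+1)) (a b : Fin (n+1)) (hab : a ≠ b) (hf : f a = f b) : F C f = 0 := by
  obtain _ | n := n
  · exact absurd (Fin.ext (by omega)) hab
  let k : Fin (n+1) := 0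
  have hk : k.castSucc ≠ k.succ := by simp [Fin.ext_iff]
  obtain ⟨σ, h1, h2⟩ : ∃ σ : Equiv.Perm (Fin (n+2)), σ k.castSucc = a ∧ σ k.succ = b := by
    refine ⟨Equiv.swap (Equiv.swap k.castSucc a k.succ) b * Equiv.swap k.castSucc a, ?_, ?_⟩
    · have : a ≠ Equiv.swap k.castSucc a k.succ := by
        intro h
        have h' : Equiv.swap k.castSucc a k.castSucc = Equiv.swap k.castSucc a k.succ := by
          rw [Equiv.swap_apply_left]; exact h
        exact hk (Equiv.injective _ h')
      simp [Equiv.swap_apply_of_ne_of_ne this hab]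
    · simp
  have h := F_eq hC k (f ∘ σ) (by simp [h1, h2, hf])
  rw [F_perm hC] at h
  rcases Int.units_eq_one_or (Equiv.Perm.sign σ) with hs | hs <;> simpa [hs] using h

/-- minors -/
def M {n : ℕ} (C : Matrix (Fin (n+1)) (Fin (n+1)) R) (j i : Fin (n+1)) : R :=
  ∑ π : Equiv.Perm (Fin n), (Equiv.Perm.sign π : ℤ) • pr C (j.succAbove ∘ π) i.succAbove

theorem M_eq {n : ℕ} (j : Fin (n+1)) (w : (Fin n → Fin (n+1)) → R) :
    ∑ g : Fin n → Fin (n+1), ((1 : Matrix (Fin (n+1)) (Fin (n+1)) ℤ).submatrix g j.succAbove).det • w g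
      = ∑ π : Equiv.Perm (Fin n), (Equiv.Perm.sign π : ℤ) • w (j.succAbove ∘ π) := by
  rw [← sum_eps_perm (fun h => w (j.succAbove ∘ h))]
  symm
  apply Finset.sum_of_injOn (fun h : Fin n → Fin n => j.succAbove ∘ h)
  · intro a _ b _ h
    exact Function.Injective.comp_left Fin.succAbove_right_injective h
  · simp
  · intro g _ hg
    have : ∃ x, g x = j := by
      by_contra! hx
      apply hg
      choose h hh using fun x => Fin.exists_succAbove_eq (hx x)
      exact ⟨h, by simp, funext hh⟩
    obtain ⟨x, hx⟩ := this
    rw [Matrix.det_eq_zero_of_row_eq_zero x, zero_smul]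
    intro y
    simp [hx, Matrix.one_apply_ne (Fin.succAbove_ne j y).symm]
  · intro h _
    congr 1
    rw [eps]
    congr 1
    ext x y
    simp [Matrix.one_apply]

theorem F_snoc {n : ℕ} (C : Matrix (Fin (n+1)) (Fin (n+1)) R) (i k : Fin (n+1)) :
    F C (Fin.snoc i.succAbove k : Fin (n+1) → Fin (n+1)) =
      ∑ j : Fin (n+1), (-1 : R) ^ (n + (j : ℕ)) * (M C j i * C j k) := by
  rw [F, ← (Fin.snocEquiv (fun _ : Fin (n+1) => Fin (n+1))).sum_comp, Fintype.sum_prod_type]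
  apply Finset.sum_congr rfl
  intro j _
  rw [M, ← M_eq j (fun g => pr C g i.succAbove), Finset.sum_mul, Finset.mul_sum]
  apply Finset.sum_congr rfl
  intro g _
  simp only [Fin.snocEquiv, Equiv.coe_fn_mk]
  rw [eps_snoc, pr_snoc]
  simp [zsmul_eq_mul, mul_assoc]

theorem cdet_eq {n : ℕ} (C : Matrix (Fin n) (Fin n) R) : cdet C = F C id := by
  rw [F, sum_eps_perm]; rfl

theorem cramer {n : ℕ} {C : Matrix (Fin (n+1)) (Fin (n+1)) R} (hC : RightQuantum C) (i k : Fin (n+1)) :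
    ∑ j : Fin (n+1), (-1 : R) ^ (n + (j : ℕ)) * (M C j i * C j k) =
      if i = k then (-1 : R) ^ (n + (i : ℕ)) * cdet C else 0 := by
  rw [← F_snoc]
  split_ifs with h
  · subst h
    have hinj : Function.Injective (Fin.snoc i.succAbove i : Fin (n+1) → Fin (n+1)) := by
      rw [Fin.snoc_injective_iff]
      exact ⟨Fin.succAbove_right_injective, by simp [Fin.succAbove_ne]⟩
    let σ := Equiv.ofBijective _ (Finite.injective_iff_bijective.1 hinj)
    have h := F_perm hC σ id
    have h2 := eps_coe σ
    have h3 : (σ : Fin (n+1) → Fin (n+1)) = Fin.snoc i.succAbove i := rfl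
    rw [← h2, h3, eps_snoc, Matrix.submatrix_one _ Fin.succAbove_right_injective] at h
    rw [cdet_eq]
    simpa using h
  · obtain ⟨a, ha⟩ := Fin.exists_succAbove_eq (Ne.symm h)
    apply F_zero hC _ a.castSucc (Fin.last n) (Fin.castSucc_lt_last a).ne
    simp [ha]

theorem cdetSub_eq {m p : ℕ} (C : Matrix (Fin m) (Fin m) R) (S T : Finset (Fin m))
    (hS : S.card = p) (hT : T.card = p) : cdetSub C S T =
      ∑ π : Equiv.Perm (Fin p), (Equiv.Perm.sign π : ℤ) •
        pr C (S.orderEmbOfFin hS ∘ π) (T.orderEmbOfFin hT) := by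
  subst hT
  rw [cdetSub, dif_pos hS]
  rfl

theorem cdetSub_M {n : ℕ} (C : Matrix (Fin (n+1)) (Fin (n+1)) R) (i j : Fin (n+1)) :
    cdetSub C (Finset.univ.erase j) (Finset.univ.erase i) = M C j i := by
  have hc : ∀ i : Fin (n+1), (Finset.univ.erase i).card = n := by simp
  have ho : ∀ i : Fin (n+1), ((Finset.univ.erase i).orderEmbOfFin (hc i) : Fin n → Fin (n+1)) = i.succAbove := by
    intro i
    symm
    apply Finset.orderEmbOfFin_unique
    · simp [Fin.succAbove_ne]
    · exact Fin.strictMono_succAbove i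
  rw [cdetSub_eq C _ _ (hc j) (hc i), M, ho, ho]

theorem rq_one_sub {m : ℕ} {A : Matrix (Fin m) (Fin m) R} (hA : RightQuantum A) :
    RightQuantum (1 - A) := by
  have hc : ∀ i j : Fin m, ∀ x : R, (1 : Matrix (Fin m) (Fin m) R) i j * x = x * (1 : Matrix (Fin m) (Fin m) R) i j := by
    intro i j x
    by_cases h : i = j <;> simp [Matrix.one_apply, h]
  constructor
  · intro i j k
    have := hA.1 i j k
    simp only [Matrix.sub_apply, sub_mul, mul_sub, this, hc _ _ (A _ _), hc j k ((1 : Matrix (Fin m) (Fin m) R) i k)]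
    abel
  · intro i j k l hkl
    have := hA.2 i j k l hkl
    have h1 : A i k * A j l = A j l * A i k - A i l * A j k + A j k * A i l := by rw [← this]; abel
    simp only [Matrix.sub_apply, sub_mul, mul_sub, h1, hc _ _ (A _ _), hc i k ((1 : Matrix (Fin m) (Fin m) R) j l),
      hc j k ((1 : Matrix (Fin m) (Fin m) R) i l)]
    abel

end RQ

theorem rightQuantum_matrix_inverse (hm : 1 ≤ m)
    (A : Matrix (Fin m) (Fin m) R) (hA : RightQuantum A)
    (B : Matrix (Fin m) (Fin m) R) (hB₁ : (1 - A) * B = 1) (hB₂ : B * (1 - A) = 1)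
    (i j : Fin m) :
    cdet (1 - A) * B i j =
      (-1 : R) ^ (((i : ℕ) + 1) + ((j : ℕ) + 1)) *
        cdetSub (1 - A) (Finset.univ.erase j) (Finset.univ.erase i) := by
  obtain _ | n := m
  · omega
  have hC := RQ.rq_one_sub hA
  generalize 1 - A = C at *
  rw [RQ.cdetSub_M]
  let N : Matrix (Fin (n+1)) (Fin (n+1)) R := fun i j => (-1 : R) ^ (n + (j : ℕ)) * RQ.M C j i
  have h1 : N * C = Matrix.diagonal fun i : Fin (n+1) => (-1 : R) ^ (n + (i : ℕ)) * cdet C := by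
    ext i k
    rw [Matrix.mul_apply, Matrix.diagonal_apply, ← RQ.cramer hC]
    simp [N, mul_assoc]
  have h2 : N i j = (-1 : R) ^ (n + (i : ℕ)) * cdet C * B i j := by
    have h := Matrix.diagonal_mul (fun i : Fin (n+1) => (-1 : R) ^ (n + (i : ℕ)) * cdet C) B i j
    rw [← h1, Matrix.mul_assoc, hB₁, Matrix.mul_one] at h
    exact h
  have h3 : ∀ t : ℕ, (-1 : R) ^ t * (-1 : R) ^ t = 1 := by
    intro t; rw [← pow_add]; exact Even.neg_one_pow ⟨t, rfl⟩
  have h4 : (-1 : R) ^ (n + (i : ℕ)) * N i j = cdet C * B i j := by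
    rw [h2, ← mul_assoc, ← mul_assoc, h3, one_mul]
  rw [← h4]
  simp only [N]
  rw [← mul_assoc]
  congr 1
  calc (-1 : R) ^ (n + (i : ℕ)) * (-1) ^ (n + (j : ℕ))
      = ((-1) ^ n * (-1) ^ n) * (-1) ^ ((i : ℕ) + j) := by
        rw [← pow_add, ← pow_add, ← pow_add]; congr 1; ring
    _ = (-1 : R) ^ (((i : ℕ) + 1) + ((j : ℕ) + 1)) := by
        rw [h3, one_mul, show ((i : ℕ) + 1) + ((j : ℕ) + 1) = (i : ℕ) + j + 2 by ring, pow_add _ _ 2,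
          neg_one_sq, mul_one]
end

section
/- Let R be a ring (not necessarily commutative), m ≥ 1, and let A = (a_{ij}) be a right-quantum m×m matrix over R. Suppose I − A is invertible over R, with inverse C. Let I, J ⊆ {1,…,m} with |I| = |J|. Then det(I − A) · det(C_{I,J}) = (−1)^{Σ_{i∈I} i + Σ_{j∈J} j} · det((I − A)^{J,I}), where det is the column determinant, C_{I,J} is the submatrix of C with rows indexed by I and columns indexed by J (each in increasing order), and (I − A)^{J,I} is the matrix I − A with the rows indexed by J and the columns indexed by I deleted. -/
/-!
Statement 9: the right-quantum Jacobi ratio theorem: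
`det(I − A) · det(C_{I,J}) = (−1)^{Σ_{i∈I} i + Σ_{j∈J} j} · det((I − A)^{J,I})`, where
`C = (I − A)⁻¹`, `det` is the column determinant, `C_{I,J}` is the submatrix of `C` with rows
`I` and columns `J` (in increasing order), and `(I − A)^{J,I}` is `I − A` with rows `J` and
columns `I` deleted.
-/

variable {R : Type*} [Ring R] {m : ℕ}

open scoped TensorProduct

noncomputable def jEps {m : ℕ} (h : Fin m → Fin m) : ℤ :=
  (Pi.basisFun ℤ (Fin m)).det (fun i => Pi.single (h i) 1)

theorem jEps_perm {m : ℕ} (h : Fin m → Fin m) (p : Equiv.Perm (Fin m)) :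
    jEps (h ∘ p) = Equiv.Perm.sign p * jEps h := by
  unfold jEps
  have := (Pi.basisFun ℤ (Fin m)).det.map_perm (fun i => Pi.single (h i) 1) p
  rw [Units.smul_def, smul_eq_mul] at this
  exact this

theorem jEps_id {m : ℕ} : jEps (id : Fin m → Fin m) = 1 := by
  unfold jEps
  have := (Pi.basisFun ℤ (Fin m)).det_self
  have h2 : (fun i : Fin m => (Pi.single (id i) 1 : Fin m → ℤ)) = Pi.basisFun ℤ (Fin m) := by
    funext i
    simp
  rw [h2, this]

theorem jEps_sign {m : ℕ} (p : Equiv.Perm (Fin m)) : jEps p = Equiv.Perm.sign p := by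
  have := jEps_perm (id : Fin m → Fin m) p
  simpa [jEps_id] using this

theorem jEps_inj {m : ℕ} (h : Fin m → Fin m) (hh : jEps h ≠ 0) : Function.Injective h := by
  intro a b hab
  by_contra hne
  apply hh
  unfold jEps
  exact (Pi.basisFun ℤ (Fin m)).det.map_eq_zero_of_eq _ (by rw [hab]) hne

theorem alt_eps {m : ℕ} {N : Type*} [AddCommGroup N] (g : (Fin m → ℤ) [⋀^Fin m]→ₗ[ℤ] N)
    (h : Fin m → Fin m) :
    g (fun i => Pi.single (h i) 1) = jEps h • g (fun i => Pi.single i 1) := by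
  by_cases hi : Function.Injective h
  · have hb : Function.Bijective h := Finite.injective_iff_bijective.mp hi
    have := g.map_perm (fun i => Pi.single i 1) (Equiv.ofBijective h hb)
    have h2 := jEps_sign (Equiv.ofBijective h hb)
    have h3 : ((Equiv.ofBijective h hb : Equiv.Perm (Fin m)) : Fin m → Fin m) = h := rfl
    rw [h3] at h2
    rw [h2, ← Units.smul_def, ← this]
    rfl
  · have : jEps h = 0 := by
      by_contra h0
      exact hi (jEps_inj h h0)
    rw [this, zero_smul]
    simp only [Function.Injective, not_forall] at hi
    obtain ⟨a, b, hab, hne⟩ := hi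
    exact g.map_eq_zero_of_eq _ (by rw [hab]) hne

theorem sum_antisymm {m : ℕ} {N : Type*} [AddCommGroup N] (T : Fin m → Fin m → N)
    (h0 : ∀ i, T i i = 0) (h1 : ∀ i j, T i j + T j i = 0) : ∑ i, ∑ j, T i j = 0 := by
  rw [← Finset.sum_product']
  refine Finset.sum_involution (fun p _ => (p.2, p.1)) ?_ ?_ ?_ ?_
  · intro p _
    exact h1 _ _
  · rintro ⟨a, b⟩ _ hp heq
    simp only [Prod.mk.injEq] at heq
    apply hp
    rw [heq.1]
    exact h0 _
  · simp
  · simp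

theorem anti_prod {m : ℕ} {S : Type*} [Ring S] (y : Fin m → S) (h0 : ∀ i, y i * y i = 0)
    (h1 : ∀ i j, y i * y j + y j * y i = 0) (h : Fin m → Fin m) :
    (List.ofFn fun i => y (h i)).prod = jEps h • (List.ofFn y).prod := by
  let L : (Fin m → ℤ) →ₗ[ℤ] S := Fintype.linearCombination ℤ y
  have hL : ∀ v, L v * L v = 0 := by
    intro v
    simp only [L, Fintype.linearCombination_apply, Finset.sum_mul_sum]
    apply sum_antisymm
    · intro i
      rw [smul_mul_smul_comm, h0, smul_zero]
    · intro i j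
      have := h1 i j
      simp only [smul_mul_smul_comm]
      rw [mul_comm (v j), ← smul_add, this, smul_zero]
  let Θ := ExteriorAlgebra.lift ℤ ⟨L, hL⟩
  have hΘ : ∀ k : Fin m → Fin m, Θ (ExteriorAlgebra.ιMulti ℤ m (fun i => Pi.single (k i) 1)) =
      (List.ofFn fun i => y (k i)).prod := by
    intro k
    rw [ExteriorAlgebra.ιMulti_apply, map_list_prod, List.map_ofFn]
    congr 2
    funext i
    simp [Θ, L, Fintype.linearCombination_apply, ExteriorAlgebra.lift_ι_apply, Pi.single_apply]
  rw [← hΘ h, alt_eps, map_zsmul]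
  congr 1
  exact hΘ id

universe u

theorem exists_grass (R : Type u) [Ring R] (m : ℕ) :
    ∃ (S : Type u) (_ : Ring S) (ψ : Fin m → S) (ρ : R →+* S) (φ : S →+ R),
      (∀ i r, Commute (ψ i) (ρ r)) ∧ (∀ i, ψ i * ψ i = 0) ∧
      (∀ i j, ψ i * ψ j + ψ j * ψ i = 0) ∧
      (∀ s r, φ (s * ρ r) = φ s * r) ∧
      ∀ h : Fin m → Fin m, φ (List.ofFn fun i => ψ (h i)).prod = (jEps h : R) := by
  let δ : (ExteriorAlgebra ℤ (Fin m → ℤ)) →ₗ[ℤ] ℤ := ExteriorAlgebra.liftAlternating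
    (Pi.single m (Pi.basisFun ℤ (Fin m)).det)
  let φ : (ExteriorAlgebra ℤ (Fin m → ℤ)) ⊗[ℤ] R →ₗ[ℤ] R := (TensorProduct.lid ℤ R).toLinearMap ∘ₗ (LinearMap.rTensor R δ)
  have hφ : ∀ a r, φ (a ⊗ₜ r) = δ a • r := by
    intro a r
    show TensorProduct.lid ℤ R (LinearMap.rTensor R δ (a ⊗ₜ r)) = _
    rw [LinearMap.rTensor_tmul, TensorProduct.lid_tmul]
  have hδ : ∀ v, δ (ExteriorAlgebra.ιMulti ℤ m v) = (Pi.basisFun ℤ (Fin m)).det v := by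
    intro v
    show ExteriorAlgebra.liftAlternating _ _ = _
    rw [ExteriorAlgebra.liftAlternating_apply_ιMulti, Pi.single_eq_same]
  refine ⟨(ExteriorAlgebra ℤ (Fin m → ℤ)) ⊗[ℤ] R, inferInstance, fun i => (ExteriorAlgebra.ι ℤ (Pi.single i 1)) ⊗ₜ 1,
    (Algebra.TensorProduct.includeRight : R →ₐ[ℤ] (ExteriorAlgebra ℤ (Fin m → ℤ)) ⊗[ℤ] R).toRingHom, φ.toAddMonoidHom,
    ?_, ?_, ?_, ?_, ?_⟩
  · intro i r
    simp [Commute, SemiconjBy]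
  · intro i
    rw [Algebra.TensorProduct.tmul_mul_tmul, ExteriorAlgebra.ι_sq_zero, TensorProduct.zero_tmul]
  · intro i j
    simp only [Algebra.TensorProduct.tmul_mul_tmul]
    rw [← TensorProduct.add_tmul, ExteriorAlgebra.ι_add_mul_swap, TensorProduct.zero_tmul]
  · intro s r
    induction s using TensorProduct.induction_on with
    | zero => simp
    | tmul a b => simp [hφ, mul_assoc]
    | add a b ha hb => 
      rw [add_mul, map_add, map_add, add_mul, ha, hb]
  · intro h
    have : (List.ofFn fun i => ((ExteriorAlgebra.ι ℤ (Pi.single (h i) 1) : (ExteriorAlgebra ℤ (Fin m → ℤ))) ⊗ₜ (1:R) : (ExteriorAlgebra ℤ (Fin m → ℤ)) ⊗[ℤ] R)).prod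
       = (ExteriorAlgebra.ιMulti ℤ m (fun i => Pi.single (h i) 1)) ⊗ₜ 1 := by
      rw [ExteriorAlgebra.ιMulti_apply]
      have := map_list_prod (Algebra.TensorProduct.includeLeft : (ExteriorAlgebra ℤ (Fin m → ℤ)) →ₐ[ℤ] (ExteriorAlgebra ℤ (Fin m → ℤ)) ⊗[ℤ] R)
        (List.ofFn fun i => ((ExteriorAlgebra.ι ℤ (Pi.single (h i) 1) : (ExteriorAlgebra ℤ (Fin m → ℤ)))))
      rw [List.map_ofFn] at this
      exact this.symm
    show φ _ = _
    rw [this, hφ, hδ]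
    simp [jEps]

theorem sum_alt {k m : ℕ} {R : Type*} [Ring R] (e : (Fin k → Fin m) → ℤ) (t : Fin k → Fin m)
    (ht : Function.Injective t)
    (h1 : ∀ f, e f ≠ 0 → Function.Injective f ∧ ∀ i, ∃ a, t a = f i)
    (h2 : ∀ f (π : Equiv.Perm (Fin k)), e (f ∘ π) = Equiv.Perm.sign π * e f)
    (F : (Fin k → Fin m) → R) :
    ∑ f, (e f : R) * F f =
      (e t : R) * ∑ π : Equiv.Perm (Fin k), (Equiv.Perm.sign π : ℤ) • F (t ∘ π) := by
  rw [Finset.mul_sum]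
  symm
  refine Fintype.sum_of_injective (fun π : Equiv.Perm (Fin k) => t ∘ π) ?_ _ _ ?_ ?_
  · intro π σ hπ
    ext i
    have := congrFun hπ i
    exact congrArg _ (ht this)
  · intro f hf
    by_cases h0 : e f = 0
    · simp [h0]
    · exfalso
      obtain ⟨hi, hr⟩ := h1 f h0
      choose a ha using hr
      have hainj : Function.Injective a := by
        intro x y hxy
        apply hi
        rw [← ha, ← ha, hxy]
      exact hf ⟨Equiv.ofBijective a (Finite.injective_iff_bijective.mp hainj), funext ha⟩
  · intro π
    rw [h2, zsmul_eq_mul, ← mul_assoc]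
    push_cast
    rw [Int.cast_comm]

theorem expand1 {m : ℕ} {S : Type*} [Ring S] (y : Fin m → S) (n : ℕ)
    (c : Fin m → Fin n → S) (hc : ∀ a b i, Commute (y a) (c b i)) :
    (List.ofFn fun i => ∑ a, y a * c a i).prod =
      ∑ f : Fin n → Fin m, (List.ofFn fun i => y (f i)).prod *
        (List.ofFn fun i => c (f i) i).prod := by
  induction n with
  | zero => simp
  | succ n ih =>
    rw [← (Fin.consEquiv (fun _ : Fin (n+1) => Fin m)).sum_comp, Fintype.sum_prod_type]
    simp only [List.ofFn_succ, List.prod_cons, Fin.consEquiv_apply, Fin.cons_zero, Fin.cons_succ]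
    rw [ih (fun a i => c a i.succ) (fun a b i => hc a b i.succ), Finset.sum_mul_sum]
    refine Finset.sum_congr rfl fun a _ => Finset.sum_congr rfl fun f _ => ?_
    have : Commute (c a 0) (List.ofFn fun i => y (f i)).prod := by
      apply Commute.list_prod_right
      intro x hx
      rw [List.mem_ofFn] at hx
      obtain ⟨i, rfl⟩ := hx
      exact (hc _ _ _).symm
    simp only [mul_assoc]
    rw [← mul_assoc (c a 0), this.eq, mul_assoc]

theorem expand2 {m : ℕ} {S : Type*} [Ring S] (y : Fin m → S) (n : ℕ) (x : Fin n → S)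
    (c : Fin m → Fin n → S) (hx : ∀ i, x i = ∑ a, y a * c a i)
    (hc : ∀ j b i, Commute (x j) (c b i)) :
    (List.ofFn x).prod =
      ∑ f : Fin n → Fin m, (List.ofFn fun i => y (f i)).prod *
        (List.ofFn fun i => c (f i) i).reverse.prod := by
  induction n with
  | zero => simp
  | succ n ih =>
    rw [← (Fin.consEquiv (fun _ : Fin (n+1) => Fin m)).sum_comp, Fintype.sum_prod_type]
    simp only [List.ofFn_succ, List.prod_cons, Fin.consEquiv_apply, Fin.cons_zero, Fin.cons_succ,
      List.reverse_cons, List.prod_append, List.prod_nil, mul_one]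
    rw [hx 0, Finset.sum_mul]
    refine Finset.sum_congr rfl fun a _ => ?_
    have : Commute (c a 0) (List.ofFn fun i : Fin n => x i.succ).prod := by
      apply Commute.list_prod_right
      intro z hz
      rw [List.mem_ofFn] at hz
      obtain ⟨i, rfl⟩ := hz
      exact (hc _ _ _).symm
    rw [mul_assoc, this.eq, ih (fun i => x i.succ) (fun a i => c a i.succ) (fun i => hx i.succ)
      (fun a b i => hc _ b i.succ), Finset.sum_mul, Finset.mul_sum]
    refine Finset.sum_congr rfl fun f _ => ?_
    simp only [mul_assoc]

theorem append_left_perm {k r : ℕ} {α : Type*} (f : Fin k → α) (u : Fin r → α)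
    (π : Equiv.Perm (Fin k)) :
    Fin.append (f ∘ π) u =
      Fin.append f u ∘ (finSumFinEquiv.permCongr (Equiv.Perm.sumCongr π 1)) := by
  funext i
  refine Fin.addCases (fun a => ?_) (fun a => ?_) i <;> simp [Equiv.permCongr_apply]

theorem append_right_perm {k r : ℕ} {α : Type*} (f : Fin k → α) (u : Fin r → α)
    (π : Equiv.Perm (Fin r)) :
    Fin.append f (u ∘ π) =
      Fin.append f u ∘ (finSumFinEquiv.permCongr (Equiv.Perm.sumCongr 1 π)) := by
  funext i
  refine Fin.addCases (fun a => ?_) (fun a => ?_) i <;> simp [Equiv.permCongr_apply]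

theorem eps_left_perm {k r : ℕ} (f : Fin k → Fin (k + r)) (u : Fin r → Fin (k + r))
    (π : Equiv.Perm (Fin k)) :
    jEps (Fin.append (f ∘ π) u) = Equiv.Perm.sign π * jEps (Fin.append f u) := by
  rw [append_left_perm, jEps_perm, Equiv.Perm.sign_permCongr, Equiv.Perm.sign_sumCongr]
  simp

theorem eps_right_perm {k r : ℕ} (f : Fin k → Fin (k + r)) (u : Fin r → Fin (k + r))
    (π : Equiv.Perm (Fin r)) :
    jEps (Fin.append f (u ∘ π)) = Equiv.Perm.sign π * jEps (Fin.append f u) := by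
  rw [append_right_perm, jEps_perm, Equiv.Perm.sign_permCongr, Equiv.Perm.sign_sumCongr]
  simp

theorem append_bij {k r : ℕ} (I : Finset (Fin (k + r))) (hI : I.card = r) (hIc : Iᶜ.card = k) :
    Function.Bijective (Fin.append (Iᶜ.orderEmbOfFin hIc) (I.orderEmbOfFin hI)) := by
  apply Finite.injective_iff_bijective.mp
  rw [Fin.append_injective_iff]
  refine ⟨(Iᶜ.orderEmbOfFin hIc).injective, (I.orderEmbOfFin hI).injective, ?_⟩
  intro a b hab
  have h1 := Finset.orderEmbOfFin_mem Iᶜ hIc a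
  rw [hab, Finset.mem_compl] at h1
  exact h1 (Finset.orderEmbOfFin_mem I hI b)

theorem count_lt {k r : ℕ} (I : Finset (Fin (k + r))) (hI : I.card = r) (hIc : Iᶜ.card = k)
    (b : Fin r) :
    ∏ a, (if Iᶜ.orderEmbOfFin hIc a < I.orderEmbOfFin hI b then (1 : ℤ) else -1) =
      (-1) ^ ((I.orderEmbOfFin hI b : ℕ) + (b + k)) := by
  set ic := Iᶜ.orderEmbOfFin hIc
  set i := I.orderEmbOfFin hI
  have h1 : ∑ a, (if ic a < i b then 1 else 0) + ∑ a, (if i a < i b then 1 else 0) = (i b : ℕ) := by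
    have := (Equiv.ofBijective _ (append_bij I hI hIc)).sum_comp (fun x => if x < i b then 1 else 0)
    rw [Fin.sum_univ_add] at this
    simp only [Equiv.ofBijective_apply, Fin.append_left, Fin.append_right] at this
    rw [this, ← Finset.card_filter, Finset.filter_gt_eq_Iio, Fin.card_Iio]
  have h2 : ∑ a, (if i a < i b then 1 else 0) = (b : ℕ) := by
    simp only [i.lt_iff_lt]
    rw [← Finset.card_filter, Finset.filter_gt_eq_Iio, Fin.card_Iio]
  have h3 : ∑ a, (if ic a < i b then 1 else 0) + ∑ a, (if ic a < i b then 0 else 1) = k := by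
    rw [← Finset.sum_add_distrib]
    rw [Finset.sum_congr rfl (g := fun _ => 1)]
    · simp
    · intro a _
      split_ifs <;> rfl
  have h4 : ∏ a, (if ic a < i b then (1 : ℤ) else -1) =
      (-1) ^ (∑ a, (if ic a < i b then 0 else 1)) := by
    rw [← Finset.prod_pow_eq_pow_sum]
    refine Finset.prod_congr rfl fun a _ => ?_
    split_ifs <;> simp
  rw [h4]
  apply neg_one_pow_congr
  simp only [Nat.even_iff]
  omega

theorem eps_append {k r : ℕ} (I : Finset (Fin (k + r))) (hI : I.card = r) (hIc : Iᶜ.card = k) :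
    jEps (Fin.append (Iᶜ.orderEmbOfFin hIc) (I.orderEmbOfFin hI)) =
      (-1) ^ (∑ x ∈ I, (x : ℕ)) * (-1) ^ (∑ b : Fin r, ((b : ℕ) + k)) := by
  have hs := jEps_sign (Equiv.ofBijective _ (append_bij I hI hIc))
  rw [Equiv.Perm.sign_eq_prod_prod_Iio] at hs
  have e : ((Equiv.ofBijective _ (append_bij I hI hIc) : Equiv.Perm (Fin (k + r))) :
    Fin (k + r) → Fin (k + r)) = Fin.append (Iᶜ.orderEmbOfFin hIc) (I.orderEmbOfFin hI) := rfl
  rw [e] at hs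
  rw [hs]
  push_cast
  simp only [← Finset.filter_gt_eq_Iio, Finset.prod_filter]
  have hsum : ∑ x ∈ I, (x : ℕ) = ∑ b, (I.orderEmbOfFin hI b : ℕ) := by
    have h := Finset.sum_map Finset.univ (I.orderEmbOfFin hI).toEmbedding
      (fun x : Fin (k + r) => (x : ℕ))
    rw [Finset.map_orderEmbOfFin_univ] at h
    exact h
  rw [hsum, ← pow_add, ← Finset.sum_add_distrib, ← Finset.prod_pow_eq_pow_sum]
  rw [Fin.prod_univ_add]
  simp only [Fin.prod_univ_add, Fin.append_left, Fin.append_right, OrderEmbedding.lt_iff_lt]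
  have t1 : ∀ (a : Fin k) (b : Fin r), Fin.castAdd r a < Fin.natAdd k b := by
    intro a b
    rw [Fin.lt_def]
    simp
    omega
  have t2 : ∀ (a : Fin k) (b : Fin r), ¬ (Fin.natAdd k b < Fin.castAdd r a) := by
    intro a b
    exact (t1 a b).le.not_gt
  have t3 : ∀ (a b : Fin r), (Fin.natAdd k a < Fin.natAdd k b) ↔ a < b := by
    intro a b
    rw [Fin.lt_def, Fin.lt_def]
    simp
  have t4 : ∀ (a b : Fin k), (Fin.castAdd r a < Fin.castAdd r b) ↔ a < b := by
    intro a b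
    rw [Fin.lt_def, Fin.lt_def]
    simp
  have t5 : ∀ p : Prop, ∀ [Decidable p], (if p then (((if p then 1 else -1 : ℤˣ)) : ℤ) else 1) = 1 := by
    intro p _
    split_ifs <;> rfl
  simp only [t1, t2, t3, t4, t5, if_true, if_false, Finset.prod_const_one, mul_one, one_mul]
  refine Finset.prod_congr rfl fun b _ => ?_
  rw [← count_lt I hI hIc b]
  refine Finset.prod_congr rfl fun a _ => ?_
  split_ifs <;> rfl

theorem cdetSub_eq {R : Type*} [Ring R] {m k : ℕ} (B : Matrix (Fin m) (Fin m) R)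
    (S T : Finset (Fin m)) (hS : S.card = k) (hT : T.card = k) :
    cdetSub B S T = ∑ π : Equiv.Perm (Fin k), (Equiv.Perm.sign π : ℤ) •
      (List.ofFn fun i => B (S.orderEmbOfFin hS (π i)) (T.orderEmbOfFin hT i)).prod := by
  subst hT
  rw [cdetSub, dif_pos hS]
  simp only [List.ofFn_eq_map, Finset.coe_orderIsoOfFin_apply]

theorem map_ofFn_prod {R S : Type*} [Ring R] [Ring S] (ρ : R →+* S) {n : ℕ} (g : Fin n → R) :
    (List.ofFn fun i => ρ (g i)).prod = ρ (List.ofFn g).prod := by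
  rw [map_list_prod, List.map_ofFn]
  rfl

theorem reverse_ofFn_eq {α : Type*} {n : ℕ} (g : Fin n → α) :
    (List.ofFn g).reverse = List.ofFn fun i => g i.rev := by
  apply List.ext_getElem
  · simp
  · intro i h1 h2
    simp only [List.getElem_reverse, List.getElem_ofFn, List.length_ofFn]
    congr 1
    apply Fin.ext
    simp [Fin.rev]
    omega

theorem jacobi_core {R : Type*} [Ring R] {k r : ℕ}
    (M C : Matrix (Fin (k + r)) (Fin (k + r)) R) (hM : RightQuantum M) (hMC : M * C = 1)
    (I J : Finset (Fin (k + r))) (hI : I.card = r) (hIc : Iᶜ.card = k)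
    (hJ : J.card = r) (hJc : Jᶜ.card = k) :
    (jEps (Fin.append (Iᶜ.orderEmbOfFin hIc) (I.orderEmbOfFin hI)) : R) *
      (cdet M * cdetSub C I J) =
    (jEps (Fin.append (Jᶜ.orderEmbOfFin hJc) (J.orderEmbOfFin hJ)) : R) * cdetSub M Jᶜ Iᶜ := by
  obtain ⟨S, _, ψ, ρ, φ, hcomm, h0, h1, hφ, hφψ⟩ := exists_grass R (k + r)
  have hM' : ∀ i j a b, M i a * M j b - M j a * M i b = M j b * M i a - M i b * M j a := by
    intro i j a b
    by_cases hab : a = b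
    · subst hab
      rw [hM.1 i j a]
    · exact hM.2 i j a b hab
  let y : Fin (k + r) → S := fun a => ∑ i, ψ i * ρ (M i a)
  have hyy : ∀ a b, y a * y b = ∑ i, ∑ j, ψ i * ψ j * ρ (M i a * M j b) := by
    intro a b
    simp only [y, Finset.sum_mul_sum]
    refine Finset.sum_congr rfl fun i _ => Finset.sum_congr rfl fun j _ => ?_
    rw [map_mul, mul_assoc, ← mul_assoc (ρ _), ← (hcomm j _).eq]
    simp only [mul_assoc]
  have hanti : ∀ i j, ψ j * ψ i = - (ψ i * ψ j) := fun i j =>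
    eq_neg_of_add_eq_zero_left (h1 j i)
  have hy0 : ∀ a, y a * y a = 0 := by
    intro a
    rw [hyy]
    apply sum_antisymm
    · intro i
      rw [h0, zero_mul]
    · intro i j
      rw [hanti i j, hM.1 i j a]
      simp
  have hy1 : ∀ a b, y a * y b + y b * y a = 0 := by
    intro a b
    rw [hyy, hyy]
    simp only [← Finset.sum_add_distrib]
    apply sum_antisymm
    · intro i
      simp only [h0, zero_mul, add_zero]
    · intro i j
      rw [hanti i j]
      have : M i a * M j b + M i b * M j a - M j a * M i b - M j b * M i a = 0 := by
        have := hM' i j a b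
        rw [sub_eq_sub_iff_add_eq_add] at this
        rw [sub_sub, sub_eq_zero, this, add_comm]
      have e : ψ i * ψ j * ρ (M i a * M j b + M i b * M j a - M j a * M i b - M j b * M i a) = 0 := by
        rw [this, map_zero, mul_zero]
      rw [← e]
      simp only [map_add, map_sub, mul_add, mul_sub, neg_mul]
      abel
  have hψy : ∀ j, ψ j = ∑ a, y a * ρ (C a j) := by
    intro j
    simp only [y, Finset.sum_mul]
    rw [Finset.sum_comm]
    have : ∀ i, ∑ a, ψ i * ρ (M i a) * ρ (C a j) = ψ i * ρ ((M * C) i j) := by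
      intro i
      rw [Matrix.mul_apply, map_sum, Finset.mul_sum]
      refine Finset.sum_congr rfl fun a _ => ?_
      rw [map_mul, mul_assoc]
    simp only [this, hMC, Matrix.one_apply]
    simp
  have hcl : ∀ {n : ℕ} (f : Fin n → Fin (k + r)) (x : R),
      Commute (List.ofFn fun i => ψ (f i)).prod (ρ x) := by
    intro n f x
    apply Commute.list_prod_left
    intro z hz
    rw [List.mem_ofFn] at hz
    obtain ⟨i, rfl⟩ := hz
    exact hcomm _ _
  have hdet : φ (List.ofFn y).prod = cdet M := by
    simp only [y]
    rw [expand1 ψ (k + r) (fun a i => ρ (M a i)) (fun a b i => hcomm _ _), map_sum]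
    simp only [map_ofFn_prod, hφ, hφψ]
    rw [sum_alt jEps id Function.injective_id (fun f hf => ⟨jEps_inj f hf, fun i => ⟨_, rfl⟩⟩)
      (fun f π => jEps_perm f π), jEps_id, cdet]
    simp [List.ofFn_eq_map]
  have happ : ∀ (z : Fin (k + r) → S) (f : Fin k → Fin (k + r)) (g : Fin r → Fin (k + r)),
      (List.ofFn fun i => z (f i)).prod * (List.ofFn fun i => z (g i)).prod =
        (List.ofFn fun i => z (Fin.append f g i)).prod := by
    intro z f g
    rw [← List.prod_append, ← List.ofFn_fin_append]
    congr 2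
    funext i
    refine Fin.addCases (fun a => ?_) (fun a => ?_) i <;> simp
  set ic := Iᶜ.orderEmbOfFin hIc with hic
  set i' := I.orderEmbOfFin hI with hi'
  set jc := Jᶜ.orderEmbOfFin hJc with hjc
  set j' := J.orderEmbOfFin hJ with hj'
  let X : S := (List.ofFn fun i => y (ic i)).prod * (List.ofFn fun i => ψ (j' i.rev)).prod
  have E1 : φ X = (jEps (Fin.append jc (j' ∘ Fin.revPerm)) : R) * cdetSub M Jᶜ Iᶜ := by
    simp only [X]
    simp only [y]
    rw [expand1 ψ k (fun a i => ρ (M a (ic i))) (fun a b i => hcomm _ _), Finset.sum_mul, map_sum]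
    have : ∀ f : Fin k → Fin (k + r), φ ((List.ofFn fun i => ψ (f i)).prod *
        (List.ofFn fun i => ρ (M (f i) (ic i))).prod * (List.ofFn fun i => ψ (j' i.rev)).prod) =
        (jEps (Fin.append f (j' ∘ Fin.revPerm)) : R) * (List.ofFn fun i => M (f i) (ic i)).prod := by
      intro f
      rw [map_ofFn_prod ρ (fun i => M (f i) (ic i)), mul_assoc,
        ← (hcl (fun i : Fin r => j' i.rev) _).eq, ← mul_assoc, hφ, happ, hφψ]
      rfl
    simp only [this]
    rw [sum_alt (fun f => jEps (Fin.append f (j' ∘ Fin.revPerm))) jc jc.injective ?_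
      (fun f π => eps_left_perm f _ π), cdetSub_eq M Jᶜ Iᶜ hJc hIc]
    · rfl
    · intro f hf
      have := jEps_inj _ hf
      rw [Fin.append_injective_iff] at this
      refine ⟨this.1, fun a => ?_⟩
      have hm : f a ∈ Set.range jc := by
        rw [hjc, Finset.range_orderEmbOfFin]
        simp only [Finset.coe_compl, Set.mem_compl_iff, SetLike.mem_coe]
        intro hfa
        have : f a ∈ Set.range j' := by
          rw [hj', Finset.range_orderEmbOfFin]
          exact hfa
        obtain ⟨b, hb⟩ := this
        apply this.2.2 a b.rev
        simp [hb]
      exact hm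
  have E2 : φ X = (jEps (Fin.append ic (i' ∘ Fin.revPerm)) : R) * (cdet M * cdetSub C I J) := by
    simp only [X]
    rw [expand2 y r (fun i => ψ (j' i.rev)) (fun a i => ρ (C a (j' i.rev))) (fun i => hψy _)
      (fun _ _ _ => hcomm _ _), Finset.mul_sum, map_sum]
    rw [← (Equiv.arrowCongr (Fin.revPerm (n := r)) (Equiv.refl (Fin (k + r)))).sum_comp]
    have : ∀ f : Fin r → Fin (k + r), φ ((List.ofFn fun i => y (ic i)).prod *
        ((List.ofFn fun i => y (f i.rev)).prod *
        (List.ofFn fun i => ρ (C (f i.rev) (j' i.rev))).reverse.prod)) =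
        (jEps (Fin.append ic (f ∘ Fin.revPerm)) : R) *
          (cdet M * (List.ofFn fun i => C (f i) (j' i)).prod) := by
      intro f
      rw [reverse_ofFn_eq, map_ofFn_prod ρ (fun i : Fin r => C (f i.rev.rev) (j' i.rev.rev)),
        ← mul_assoc, hφ, happ, anti_prod y hy0 hy1, map_zsmul, hdet, zsmul_eq_mul, mul_assoc]
      simp only [Fin.rev_rev]
      rfl
    have this' := Finset.sum_congr (rfl : (Finset.univ : Finset (Fin r → Fin (k + r))) = _)
      (fun f _ => this f)
    refine Eq.trans this' ?_
    rw [sum_alt (fun f => jEps (Fin.append ic (f ∘ Fin.revPerm))) i' i'.injective ?_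
      ?_, cdetSub_eq C I J hI hJ]
    · congr 1
      rw [Finset.mul_sum]
      refine Finset.sum_congr rfl fun π _ => ?_
      rw [mul_smul_comm]
      rfl
    · intro f hf
      have := jEps_inj _ hf
      rw [Fin.append_injective_iff] at this
      refine ⟨fun a b hab => ?_, fun a => ?_⟩
      · have h := @this.2.1 a.rev b.rev (by simpa using hab)
        exact Fin.rev_injective h
      have hm : f a ∈ Set.range i' := by
        rw [hi', Finset.range_orderEmbOfFin]
        by_contra hfa
        have : f a ∈ Set.range ic := by
          rw [hic, Finset.range_orderEmbOfFin]
          simpa using hfa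
        obtain ⟨b, hb⟩ := this
        apply this.2.2 b a.rev
        simp [hb]
      exact hm
    · intro f π
      simp only [eps_right_perm]
      ring
  rw [E1, eps_right_perm, eps_right_perm] at E2
  push_cast at E2
  rw [mul_assoc, mul_assoc] at E2
  have hu : IsUnit (((Equiv.Perm.sign (Fin.revPerm (n := r)) : ℤ)) : R) :=
    (Units.isUnit _).map (Int.castRingHom R)
  exact (hu.mul_left_cancel E2).symm

theorem rightQuantum_jacobi_ratio (hm : 1 ≤ m)
    (A : Matrix (Fin m) (Fin m) R) (hA : RightQuantum A)
    (C : Matrix (Fin m) (Fin m) R) (hC₁ : (1 - A) * C = 1) (hC₂ : C * (1 - A) = 1)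
    (I J : Finset (Fin m)) (hIJ : I.card = J.card) :
    cdet (1 - A) * cdetSub C I J =
      (-1 : R) ^ ((∑ i ∈ I, ((i : ℕ) + 1)) + ∑ j ∈ J, ((j : ℕ) + 1)) *
        cdetSub (1 - A) Jᶜ Iᶜ := by
  have hM : RightQuantum (1 - A) := by
    have hc : ∀ i k (x : R), Commute ((1 : Matrix (Fin m) (Fin m) R) i k) x := by
      intro i k x
      rw [Matrix.one_apply]
      split_ifs
      · exact Commute.one_left x
      · exact Commute.zero_left x
    have key : ∀ i j k l, (1 - A) i k * (1 - A) j l - (1 - A) j l * (1 - A) i k =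
        A i k * A j l - A j l * A i k := by
      intro i j k l
      simp only [Matrix.sub_apply]
      have e1 := (hc i k (A j l)).eq
      have e2 := (hc j l (A i k)).eq
      have e3 := (hc i k ((1 : Matrix (Fin m) (Fin m) R) j l)).eq
      simp only [sub_mul, mul_sub, e1, e2, e3]
      abel
    constructor
    · intro i j k
      have := key j i k k
      rw [hA.1 i j k, sub_self] at this
      exact sub_eq_zero.mp this
    · intro i j k l hkl
      have h := hA.2 i j k l hkl
      have e1 := key i j k l
      have e2 := key j i k l
      have e3 : A i k * A j l - A j l * A i k = A j k * A i l - A i l * A j k := by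
        rw [sub_eq_sub_iff_add_eq_add] at h ⊢
        rw [h, add_comm]
      rw [e3, ← e2, sub_eq_sub_iff_add_eq_add] at e1
      rw [sub_eq_sub_iff_add_eq_add, e1, add_comm]
  clear hC₂ hm
  generalize 1 - A = M at *
  have hmk : m = Iᶜ.card + I.card := by
    rw [Finset.card_compl_add_card, Fintype.card_fin]
  have hJc : Jᶜ.card = Iᶜ.card := by
    rw [Finset.card_compl, Finset.card_compl, hIJ]
  obtain ⟨k, hk⟩ : ∃ k, Iᶜ.card = k := ⟨_, rfl⟩
  obtain ⟨r, hr⟩ : ∃ r, I.card = r := ⟨_, rfl⟩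
  rw [hk, hr] at hmk
  subst hmk
  have core := jacobi_core M C hM hC₁ I J hr hk (hIJ ▸ hr) (hJc.trans hk)
  rw [eps_append, eps_append] at core
  push_cast at core
  rw [← pow_add, ← pow_add] at core
  generalize cdet M * cdetSub C I J = L at *
  generalize cdetSub M Jᶜ Iᶜ = Q at *
  have h := congrArg (fun z => (-1 : R) ^ (∑ x ∈ I, (x : ℕ) + ∑ b : Fin r, ((b : ℕ) + k)) * z) core
  simp only [← mul_assoc, ← pow_add] at h
  rw [Even.neg_one_pow ⟨_, rfl⟩, one_mul] at h
  rw [h]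
  congr 1
  apply neg_one_pow_congr
  generalize ∑ b : Fin r, ((b : ℕ) + k) = K
  rw [Finset.sum_add_distrib, Finset.sum_add_distrib, Finset.sum_const, Finset.sum_const, ← hIJ]
  simp only [Nat.even_iff, smul_eq_mul, mul_one]
  omega
end

section
/- Let R be a ring (not necessarily commutative), m ≥ 1, and let A = (a_{ij}) be a right-quantum m×m matrix over R. Suppose I − A is invertible over R, with inverse C. Then det(I − A) · det(C) = 1, where det is the column determinant; that is, the column determinant of (I − A)⁻¹ is the inverse of the column determinant of I − A. -/
/-!
Statement 10: for a right-quantum matrix `A` with `I − A` invertible (inverse `C`),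
`det(I − A) · det(C) = 1`, where `det` is the column determinant; that is, the column
determinant of `(I − A)⁻¹` is the inverse of the column determinant of `I − A`.
-/

variable {R : Type*} [Ring R] {m : ℕ}

section helpers
open scoped TensorProduct

theorem aux_alt {S : Type*} [Ring S] {m : ℕ} (φ : Fin m → S)
    (h0 : ∀ i, φ i * φ i = 0) (h1 : ∀ i j, φ i * φ j = - (φ j * φ i)) :
    ∃ F : (Fin m → ℤ) [⋀^Fin m]→ₗ[ℤ] S, ∀ g : Fin m → Fin m,
      F (fun k => Pi.single (g k) 1) = (List.ofFn fun k => φ (g k)).prod := by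
  let f : (Fin m → ℤ) →ₗ[ℤ] S := Fintype.linearCombination ℤ φ
  have hf : ∀ v, f v * f v = 0 := by
    intro v
    simp only [f, Fintype.linearCombination_apply, Finset.sum_mul_sum]
    have : ∀ s : Finset (Fin m), ∑ i ∈ s, ∑ j ∈ s, v i • φ i * v j • φ j = 0 := by
      intro s
      induction s using Finset.induction_on with
      | empty => simp
      | insert a s ha ih =>
        rw [Finset.sum_insert ha, Finset.sum_insert ha]
        simp only [Finset.sum_insert ha, Finset.sum_add_distrib]
        rw [ih, add_zero, smul_mul_smul_comm, h0, smul_zero, zero_add, ← Finset.sum_add_distrib]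
        apply Finset.sum_eq_zero
        intro i _
        rw [smul_mul_smul_comm, smul_mul_smul_comm, h1 i a, mul_comm (v i), smul_neg]
        simp
    exact this _
  let G : ExteriorAlgebra ℤ (Fin m → ℤ) →ₐ[ℤ] S := ExteriorAlgebra.lift ℤ ⟨f, hf⟩
  refine ⟨G.toLinearMap.compAlternatingMap (ExteriorAlgebra.ιMulti ℤ m), fun g => ?_⟩
  simp only [LinearMap.compAlternatingMap_apply, ExteriorAlgebra.ιMulti_apply,
    AlgHom.toLinearMap_apply, map_list_prod, List.map_ofFn]
  congr 2
  funext k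
  simp [G, f, ExteriorAlgebra.lift_ι_apply, Fintype.linearCombination_apply_single]

theorem aux_sum_perm {S : Type*} [Ring S] {m : ℕ} (φ : Fin m → S)
    (h0 : ∀ i, φ i * φ i = 0) (h1 : ∀ i j, φ i * φ j = - (φ j * φ i))
    (w : (Fin m → Fin m) → S) :
    ∑ g : Fin m → Fin m, (List.ofFn fun k => φ (g k)).prod * w g =
      (List.ofFn φ).prod * ∑ σ : Equiv.Perm (Fin m), (Equiv.Perm.sign σ : ℤ) • w σ := by
  obtain ⟨F, hF⟩ := aux_alt φ h0 h1
  rw [Finset.mul_sum]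
  symm
  apply Fintype.sum_of_injective (fun σ : Equiv.Perm (Fin m) => (σ : Fin m → Fin m))
    DFunLike.coe_injective
  · intro g hg
    rw [← hF, F.map_eq_zero_of_not_injective, zero_mul]
    intro hi
    have hi' : Function.Injective g := by
      intro a b hab
      apply hi
      simp [hab]
    exact hg ⟨Equiv.ofBijective g (Finite.injective_iff_bijective.1 hi'), rfl⟩
  · intro σ
    have := F.map_perm (fun k => Pi.single k 1) σ
    have h2 := hF σ
    have h3 := hF id
    simp only [id] at h3
    rw [← h2]
    have h4 : (F fun k => Pi.single (σ k) 1) = (Equiv.Perm.sign σ) • F (fun k => Pi.single k 1) := this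
    rw [h4, h3, Units.smul_def, mul_smul_comm, smul_mul_assoc]

theorem aux_comm_prod {S : Type*} [Ring S] {m : ℕ} (φ : Fin m → S) (r : S)
    (h : ∀ i, φ i * r = r * φ i) {n : ℕ} (g : Fin n → Fin m) :
    (List.ofFn fun k => φ (g k)).prod * r = r * (List.ofFn fun k => φ (g k)).prod := by
  induction n with
  | zero => simp
  | succ n ih =>
    rw [List.ofFn_succ, List.prod_cons, mul_assoc, ih (fun k => g k.succ), ← mul_assoc, h, mul_assoc]

theorem aux_anti_prod {S : Type*} [Ring S] {m : ℕ} (φ : Fin m → S) (r : S)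
    (h : ∀ i, φ i * r = -(r * φ i)) {n : ℕ} (g : Fin n → Fin m) :
    (List.ofFn fun k => φ (g k)).prod * r = (-1) ^ n * (r * (List.ofFn fun k => φ (g k)).prod) := by
  induction n with
  | zero => simp
  | succ n ih =>
    rw [List.ofFn_succ, List.prod_cons, mul_assoc, ih (fun k => g k.succ), pow_succ]
    rcases neg_one_pow_eq_or S n with h' | h' <;> rw [h'] <;> simp [← mul_assoc, h]

theorem aux_sum_succ {S : Type*} [Ring S] {m n : ℕ} (f : (Fin (n+1) → Fin m) → S) :
    ∑ g, f g = ∑ j : Fin m, ∑ g : Fin n → Fin m, f (Fin.cons j g) := by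
  rw [← Fintype.sum_prod_type']
  exact (Fintype.sum_equiv (Fin.consEquiv fun _ => Fin m) _ _ (fun x => rfl)).symm

/-- expansion of the product of transformed variables -/
theorem aux_expand {R S : Type*} [Ring R] [Ring S] {m : ℕ} (ι : R →+* S) (ψ : Fin m → S)
    (hc : ∀ i r, ψ i * ι r = ι r * ψ i) (M : Matrix (Fin m) (Fin m) R) {n : ℕ} (c : Fin n → Fin m) :
    (List.ofFn fun k => ∑ i, ψ i * ι (M i (c k))).prod =
      ∑ g : Fin n → Fin m, (List.ofFn fun k => ψ (g k)).prod *
        ι (List.ofFn fun k => M (g k) (c k)).prod := by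
  induction n with
  | zero => simp
  | succ n ih =>
    rw [List.ofFn_succ, List.prod_cons, ih (fun k => c k.succ), aux_sum_succ, Finset.sum_mul_sum]
    refine Finset.sum_congr rfl fun j _ => Finset.sum_congr rfl fun g _ => ?_
    simp only [List.ofFn_succ, List.prod_cons, Fin.cons_zero, Fin.cons_succ, map_mul]
    have := aux_comm_prod ψ (ι (M j (c 0))) (fun i => hc i _) g
    simp only [mul_assoc]
    rw [← mul_assoc (ι _), ← this]
    simp only [mul_assoc]

/-- expansion in the other direction -/
theorem aux_expand' {R S : Type*} [Ring R] [Ring S] {m : ℕ} (ι : R →+* S) (ψ φ : Fin m → S)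
    (C : Matrix (Fin m) (Fin m) R)
    (ha : ∀ i j, φ i * ψ j = -(ψ j * φ i)) (hφ : ∀ i j, φ i * φ j = -(φ j * φ i))
    (hC : ∀ j, ψ j = ∑ i, φ i * ι (C i j)) {n : ℕ} (c : Fin n → Fin m) :
    (List.ofFn fun k => ψ (c k)).prod =
      ∑ g : Fin n → Fin m, (List.ofFn fun k => φ (g k)).prod *
        ι (List.ofFn fun k => C (g k) (c k)).prod := by
  induction n with
  | zero => simp
  | succ n ih =>
    rw [List.ofFn_succ, List.prod_cons, ih (fun k => c k.succ), aux_sum_succ, Finset.sum_comm,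
      Finset.mul_sum]
    refine Finset.sum_congr rfl fun g _ => ?_
    simp only [List.ofFn_succ, List.prod_cons, Fin.cons_zero, Fin.cons_succ, map_mul]
    have key : ∀ r : S, (∀ i, φ i * r = -(r * φ i)) →
        r * (List.ofFn fun k => φ (g k)).prod = (-1)^n * ((List.ofFn fun k => φ (g k)).prod * r) := by
      intro r hr
      rw [aux_anti_prod φ r hr g, ← mul_assoc, ← pow_add, Even.neg_one_pow ⟨n, rfl⟩, one_mul]
    rw [← mul_assoc, key (ψ (c 0)) (fun i => ha i _), hC, Finset.mul_sum, Finset.mul_sum,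
      Finset.sum_mul]
    refine Finset.sum_congr rfl fun j _ => ?_
    rw [key (φ j) (fun i => hφ i _)]
    simp only [mul_assoc]

theorem aux_main {R S : Type*} [Ring R] [Ring S] {m : ℕ} (ι : R →+* S) (ψ : Fin m → S)
    (h0 : ∀ i, ψ i * ψ i = 0) (h1 : ∀ i j, ψ i * ψ j = - (ψ j * ψ i))
    (hc : ∀ i r, ψ i * ι r = ι r * ψ i) (M C : Matrix (Fin m) (Fin m) R)
    (hM1 : ∀ i j k, M j k * M i k = M i k * M j k)
    (hM2 : ∀ i j k l, k ≠ l → M i k * M j l - M j k * M i l = M j l * M i k - M i l * M j k)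
    (hMC : M * C = 1) :
    (List.ofFn ψ).prod * ι (cdet M * cdet C) = (List.ofFn ψ).prod := by
  have hcd : ∀ B : Matrix (Fin m) (Fin m) R, ι (cdet B) =
      ∑ σ : Equiv.Perm (Fin m), (Equiv.Perm.sign σ : ℤ) • ι (List.ofFn fun k => B (σ k) k).prod := by
    intro B
    simp only [cdet, map_sum, map_zsmul, List.ofFn_eq_map]
  set φ : Fin m → S := fun k => ∑ i, ψ i * ι (M i k) with hφ
  have hmul : ∀ k l, φ k * φ l = ∑ i, ∑ j, ψ i * ψ j * ι (M i k * M j l) := by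
    intro k l
    simp only [hφ, Finset.sum_mul_sum]
    refine Finset.sum_congr rfl fun i _ => Finset.sum_congr rfl fun j _ => ?_
    rw [mul_assoc, ← mul_assoc (ι _), ← hc, map_mul]
    simp only [mul_assoc]
  -- a vanishing principle
  have van : ∀ N : Fin m → Fin m → R, (∀ i j, N i j = N j i) →
      ∑ i, ∑ j, ψ i * ψ j * ι (N i j) = 0 := by
    intro N hN
    have : ∀ s : Finset (Fin m), ∑ i ∈ s, ∑ j ∈ s, ψ i * ψ j * ι (N i j) = 0 := by
      intro s
      induction s using Finset.induction_on with
      | empty => simp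
      | insert a s ha ih =>
        rw [Finset.sum_insert ha, Finset.sum_insert ha]
        simp only [Finset.sum_insert ha, Finset.sum_add_distrib]
        rw [ih, add_zero, h0, zero_mul, zero_add, ← Finset.sum_add_distrib]
        apply Finset.sum_eq_zero
        intro i _
        rw [h1 i a, hN i a]
        simp
    exact this _
  have hφ0 : ∀ k, φ k * φ k = 0 := fun k => by
    rw [hmul]
    exact van _ (fun i j => hM1 j i k)
  have hφ1 : ∀ k l, φ k * φ l = -(φ l * φ k) := by
    intro k l
    by_cases hkl : k = l
    · subst hkl; simp [hφ0]
    rw [eq_neg_iff_add_eq_zero, hmul, hmul, ← Finset.sum_add_distrib]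
    simp only [← Finset.sum_add_distrib, ← mul_add, ← map_add]
    apply van (fun i j => M i k * M j l + M i l * M j k)
    intro i j
    have := hM2 i j k l hkl
    rw [sub_eq_sub_iff_add_eq_add] at this
    rw [this]; abel
  have hφψ : ∀ k j, φ k * ψ j = -(ψ j * φ k) := by
    intro k j
    simp only [hφ, Finset.sum_mul, Finset.mul_sum, ← Finset.sum_neg_distrib]
    refine Finset.sum_congr rfl fun i _ => ?_
    rw [mul_assoc, ← hc, ← mul_assoc, ← mul_assoc, h1 i j, neg_mul]
  have hψ : ∀ j, ψ j = ∑ i, φ i * ι (C i j) := by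
    intro j
    simp only [hφ, Finset.sum_mul]
    rw [Finset.sum_comm]
    simp only [mul_assoc, ← map_mul, ← Finset.mul_sum, ← map_sum, ← Matrix.mul_apply, hMC]
    simp [Matrix.one_apply]
  have e1 := aux_expand ι ψ hc M (fun k : Fin m => k)
  rw [aux_sum_perm ψ h0 h1 (fun g => ι (List.ofFn fun k => M (g k) k).prod), ← hcd] at e1
  have e2 := aux_expand' ι ψ φ C hφψ hφ1 hψ (fun k : Fin m => k)
  rw [aux_sum_perm φ hφ0 hφ1 (fun g => ι (List.ofFn fun k => C (g k) k).prod), ← hcd] at e2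
  rw [map_mul, ← mul_assoc, ← e1, ← e2]

theorem aux_final {R : Type*} [Ring R] {m : ℕ} (M C : Matrix (Fin m) (Fin m) R)
    (hM1 : ∀ i j k, M j k * M i k = M i k * M j k)
    (hM2 : ∀ i j k l, k ≠ l → M i k * M j l - M j k * M i l = M j l * M i k - M i l * M j k)
    (hMC : M * C = 1) : cdet M * cdet C = 1 := by
  let Λ := ExteriorAlgebra ℤ (Fin m → ℤ)
  let e : Fin m → Λ := fun i => ExteriorAlgebra.ι ℤ (Pi.single i 1)
  let ψ : Fin m → Λ ⊗[ℤ] R := fun i => e i ⊗ₜ 1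
  let ι : R →+* Λ ⊗[ℤ] R := (Algebra.TensorProduct.includeRight : R →ₐ[ℤ] Λ ⊗[ℤ] R).toRingHom
  have hι : ∀ r, ι r = 1 ⊗ₜ r := fun r => rfl
  have key := aux_main ι ψ (fun i => by
    have : e i * e i = 0 := ExteriorAlgebra.ι_sq_zero _
    simp only [ψ, Algebra.TensorProduct.tmul_mul_tmul, this, TensorProduct.zero_tmul]) (fun i j => by
    have : e i * e j = -(e j * e i) :=
      eq_neg_of_add_eq_zero_left (ExteriorAlgebra.ι_add_mul_swap _ _)
    simp only [ψ, Algebra.TensorProduct.tmul_mul_tmul, this, TensorProduct.neg_tmul])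
    (fun i r => by simp [ψ, hι]) M C hM1 hM2 hMC
  have hprod : (List.ofFn ψ).prod = (List.ofFn e).prod ⊗ₜ[ℤ] (1 : R) := by
    have := map_list_prod (Algebra.TensorProduct.includeLeft : Λ →ₐ[ℤ] Λ ⊗[ℤ] R) (List.ofFn e)
    rw [List.map_ofFn] at this
    exact this.symm
  let D : Λ →ₗ[ℤ] ℤ := ExteriorAlgebra.liftAlternating
    (Function.update (fun _ => 0) m (Matrix.detRowAlternating : (Fin m → ℤ) [⋀^Fin m]→ₗ[ℤ] ℤ))
  have hD : D (List.ofFn e).prod = 1 := by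
    have h : (List.ofFn e).prod = ExteriorAlgebra.ιMulti ℤ m (fun i : Fin m => Pi.single i (1:ℤ)) := by
      rw [ExteriorAlgebra.ιMulti_apply]
    rw [h]
    refine (ExteriorAlgebra.liftAlternating_apply_ιMulti _ _).trans ?_
    rw [Function.update_self]
    have : (fun i : Fin m => Pi.single i (1:ℤ)) = (1 : Matrix (Fin m) (Fin m) ℤ) := by
      ext i j
      simp [Matrix.one_apply, Pi.single_apply, eq_comm]
    rw [this]
    exact Matrix.det_one
  have k2 := congrArg (fun x => TensorProduct.lid ℤ R (TensorProduct.map D LinearMap.id x)) key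
  simpa [hprod, hι, hD] using k2

theorem aux_shift {R : Type*} [Ring R] (a b c d w x y z : R)
    (ha : ∀ r, a * r = r * a) (hb : ∀ r, b * r = r * b) (hc : ∀ r, c * r = r * c)
    (hd : ∀ r, d * r = r * d) (h : w * x - y * z = x * w - z * y) :
    (a - w) * (b - x) - (c - y) * (d - z) = (b - x) * (a - w) - (d - z) * (c - y) := by
  have e1 : (a - w) * (b - x) = w * x + (a * b - x * a - w * b) := by
    rw [← ha x]; noncomm_ring
  have e2 : (c - y) * (d - z) = y * z + (c * d - z * c - y * d) := by
    rw [← hc z]; noncomm_ring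
  have e3 : (b - x) * (a - w) = x * w + (a * b - x * a - w * b) := by
    rw [ha b, ← hb w]; noncomm_ring
  have e4 : (d - z) * (c - y) = z * y + (c * d - z * c - y * d) := by
    rw [hc d, ← hd y]; noncomm_ring
  rw [e1, e2, e3, e4, add_sub_add_comm, add_sub_add_comm, h]

end helpers

theorem cdet_inverse (hm : 1 ≤ m)
    (A : Matrix (Fin m) (Fin m) R) (hA : RightQuantum A)
    (C : Matrix (Fin m) (Fin m) R) (hC₁ : (1 - A) * C = 1) (hC₂ : C * (1 - A) = 1) :
    cdet (1 - A) * cdet C = 1 := by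
  have e1 : ∀ x y : Fin m, ∀ r : R, (1 : Matrix (Fin m) (Fin m) R) x y * r =
      r * (1 : Matrix (Fin m) (Fin m) R) x y := by
    intro x y r
    rw [Matrix.one_apply]; split_ifs <;> simp
  refine aux_final (1 - A) C ?_ ?_ hC₁
  · intro i j k
    have hh := hA.1 i j k
    have := aux_shift _ _ 0 0 _ _ 0 0 (e1 j k) (e1 i k) (by simp) (by simp)
      (by rw [hh] : A j k * A i k - 0 * 0 = A i k * A j k - 0 * 0)
    simpa using this
  · intro i j k l hkl
    exact aux_shift _ _ _ _ _ _ _ _ (e1 _ _) (e1 _ _) (e1 _ _) (e1 _ _) (hA.2 i j k l hkl)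
end

section
/- Let R be a ring (not necessarily commutative), m ≥ 1, and let A = (a_{ij}) be an m×m matrix over R such that a_{jk}a_{ik} = a_{ik}a_{jk} holds for all i,j and all k ≠ m, and a_{ik}a_{jl} − a_{jk}a_{il} = a_{jl}a_{ik} − a_{il}a_{jk} holds for all i,j and all k ≠ l with k,l ≠ m (i.e., the right-quantum relations are assumed only for columns other than the last). Suppose I − A is invertible over R with inverse B. Then det(I − A) · B_{mm} = det((I − A)^{mm}), where det is the column determinant and (I − A)^{mm} is I − A with its m-th row and m-th column deleted. -/
/-!
Statement 11: if the right-quantum relations hold for all columns other than the last one,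
and `I − A` is invertible with inverse `B`, then
`det(I − A) · B_{mm} = det((I − A)^{mm})`, where `det` is the column determinant and
`(I − A)^{mm}` is `I − A` with its last row and last column deleted.
-/

variable {R : Type*} [Ring R] {m : ℕ}

theorem aux_split {n : ℕ} (j j' : Fin n) (h : (j' : ℕ) = j + 1) :
    ∃ l₁ l₂ : List (Fin n), List.finRange n = l₁ ++ j :: j' :: l₂ ∧
      (∀ x ∈ l₁, x ≠ j ∧ x ≠ j') ∧ (∀ x ∈ l₂, x ≠ j ∧ x ≠ j') := by
  have e : List.finRange n = (List.finRange n).take j ++ j :: j' :: (List.finRange n).drop (j + 2) := by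
    conv_lhs => rw [← List.take_append_drop (j : ℕ) (List.finRange n)]
    congr 1
    rw [List.drop_eq_getElem_cons (by simp), List.drop_eq_getElem_cons (by simp; omega)]
    simp
    ext; simp [h]
  refine ⟨_, _, e, ?_⟩
  have nd := List.nodup_finRange n
  rw [e] at nd
  generalize (List.finRange n).take j = l₁ at nd
  generalize (List.finRange n).drop (j + 2) = l₂ at nd
  rw [List.nodup_append] at nd
  obtain ⟨_, h2, h3⟩ := nd
  rw [List.nodup_cons, List.nodup_cons] at h2
  obtain ⟨h4, h5, _⟩ := h2
  constructor
  · intro x hx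
    exact ⟨h3 x hx j (by simp), h3 x hx j' (by simp)⟩
  · intro x hx
    refine ⟨?_, ?_⟩
    · rintro rfl; exact h4 (by simp [hx])
    · rintro rfl; exact h5 hx

def auxD {R : Type*} [Ring R] {n : ℕ} (C : Matrix (Fin n) (Fin n) R) (f : Fin n → Fin n) : R :=
  ∑ π : Equiv.Perm (Fin n),
    (Equiv.Perm.sign π : ℤ) • ((List.finRange n).map fun k => C (π k) (f k)).prod

theorem auxD_eq {R : Type*} [Ring R] {n : ℕ} (C : Matrix (Fin n) (Fin n) R) (f : Fin n → Fin n)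
    (j j' : Fin n) (h : (j' : ℕ) = j + 1)
    (hc : ∀ a b, C a (f j) * C b (f j) = C b (f j) * C a (f j)) (he : f j = f j') :
    auxD C f = 0 := by
  obtain ⟨l₁, l₂, e, n1, n2⟩ := aux_split j j' h
  have hne : j ≠ j' := by intro hh; rw [hh] at h; omega
  unfold auxD
  rw [e]
  refine Finset.sum_involution (fun π _ => π * Equiv.swap j j') ?_ ?_ (by simp) (by simp [mul_assoc])
  · intro π _
    have m1 : (l₁.map fun k => C ((π * Equiv.swap j j') k) (f k)) = l₁.map fun k => C (π k) (f k) := by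
      apply List.map_congr_left
      intro x hx
      simp [Equiv.swap_apply_of_ne_of_ne (n1 x hx).1 (n1 x hx).2]
    have m2 : (l₂.map fun k => C ((π * Equiv.swap j j') k) (f k)) = l₂.map fun k => C (π k) (f k) := by
      apply List.map_congr_left
      intro x hx
      simp [Equiv.swap_apply_of_ne_of_ne (n2 x hx).1 (n2 x hx).2]
    simp only [List.map_append, List.map_cons, List.prod_append, List.prod_cons, m1, m2]
    have hh := hc (π j) (π j')
    simp only [Equiv.Perm.coe_mul, Function.comp, Equiv.swap_apply_left, Equiv.swap_apply_right, ← he,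
      Equiv.Perm.sign_mul, Equiv.Perm.sign_swap hne]
    rw [← mul_assoc (C (π j) (f j)), hh]
    simp [mul_assoc]
  · intro π _ _ hπ
    apply hne
    have := congrArg (fun g => g j) hπ
    simpa [Eq.comm] using this

theorem auxD_swap {R : Type*} [Ring R] {n : ℕ} (C : Matrix (Fin n) (Fin n) R) (f : Fin n → Fin n)
    (j j' : Fin n) (h : (j' : ℕ) = j + 1)
    (hc : ∀ a b, C a (f j) * C b (f j') - C b (f j) * C a (f j')
      = C b (f j') * C a (f j) - C a (f j') * C b (f j)) :
    auxD C f + auxD C (f ∘ Equiv.swap j j') = 0 := by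
  obtain ⟨l₁, l₂, e, n1, n2⟩ := aux_split j j' h
  have hne : j ≠ j' := by intro hh; rw [hh] at h; omega
  unfold auxD
  rw [e, ← Finset.sum_add_distrib]
  refine Finset.sum_involution (fun π _ => π * Equiv.swap j j') ?_ ?_ (by simp) (by simp [mul_assoc])
  · intro π _
    have m0 : ∀ l : List (Fin n), (∀ x ∈ l, x ≠ j ∧ x ≠ j') → ∀ (σ : Equiv.Perm (Fin n)),
        (l.map fun k => C ((σ * Equiv.swap j j') k) (f k)) = l.map fun k => C (σ k) (f k) := by
      intro l hl σ
      apply List.map_congr_left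
      intro x hx
      simp [Equiv.swap_apply_of_ne_of_ne (hl x hx).1 (hl x hx).2]
    have m1 : ∀ l : List (Fin n), (∀ x ∈ l, x ≠ j ∧ x ≠ j') → ∀ (σ : Equiv.Perm (Fin n)),
        (l.map fun k => C (σ k) ((f ∘ Equiv.swap j j') k)) = l.map fun k => C (σ k) (f k) := by
      intro l hl σ
      apply List.map_congr_left
      intro x hx
      simp [Equiv.swap_apply_of_ne_of_ne (hl x hx).1 (hl x hx).2]
    simp only [List.map_append, List.map_cons, List.prod_append, List.prod_cons, m1 _ n1, m1 _ n2,
      m0 _ n1, m0 _ n2]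
    have hh := hc (π j) (π j')
    simp only [Equiv.Perm.coe_mul, Function.comp, Equiv.swap_apply_left, Equiv.swap_apply_right,
      Equiv.Perm.sign_mul, Equiv.Perm.sign_swap hne]
    generalize (l₁.map fun k => C (π k) (f k)).prod = P
    generalize (l₂.map fun k => C (π k) (f k)).prod = Q
    generalize C (π j) (f j) = a at *
    generalize C (π j) (f j') = b at *
    generalize C (π j') (f j) = c at *
    generalize C (π j') (f j') = d at *
    have key : P * (a * (d * Q)) + P * (b * (c * Q)) - P * (c * (b * Q)) - P * (d * (a * Q)) = 0 := by
      have : P * (a * (d * Q)) + P * (b * (c * Q)) - P * (c * (b * Q)) - P * (d * (a * Q))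
        = P * ((a * d - c * b) - (d * a - b * c)) * Q := by noncomm_ring
      rw [this, hh]; simp
    rw [← smul_add, ← smul_add]
    push_cast
    rw [mul_neg_one, neg_smul, ← sub_eq_add_neg, ← smul_sub]
    have k2 : P * (a * (d * Q)) + P * (b * (c * Q)) - (P * (c * (b * Q)) + P * (d * (a * Q))) = 0 := by
      rw [← sub_sub]; exact key
    rw [k2, smul_zero]
  · intro π _ _ hπ
    apply hne
    have := congrArg (fun g => g j) hπ
    simpa [Eq.comm] using this

theorem auxD_rep {R : Type*} [Ring R] {n : ℕ} (C : Matrix (Fin n) (Fin n) R)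
    (g : Fin n → Prop)
    (h₁ : ∀ i j k : Fin n, g k → C j k * C i k = C i k * C j k)
    (h₂ : ∀ i j k l : Fin n, g k → g l →
      C i k * C j l - C j k * C i l = C j l * C i k - C i l * C j k) (d : ℕ) :
    ∀ (f : Fin n → Fin n) (p q : Fin n), (∀ k, g (f k)) → (q : ℕ) = p + 1 + d → f p = f q →
      auxD C f = 0 := by
  induction d with
  | zero =>
    intro f p q hg hq hf
    exact auxD_eq C f p q hq (fun a b => h₁ _ _ _ (hg _)) hf
  | succ d ih =>
    intro f p q hg hq hf
    have hq' : (p : ℕ) + 1 + d < n := by omega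
    have := auxD_swap C f ⟨p + 1 + d, hq'⟩ q (by simp; omega) (fun a b => h₂ _ _ _ _ (hg _) (hg _))
    rw [ih (f ∘ _) p ⟨p + 1 + d, hq'⟩ (fun k => hg _) rfl ?_] at this
    · simpa using this
    · have e1 : p ≠ ⟨p + 1 + d, hq'⟩ := by intro hh; have := congrArg Fin.val hh; simp at this; omega
      have e2 : p ≠ q := by rintro rfl; omega
      simp [Equiv.swap_apply_of_ne_of_ne e1 e2, hf]

def auxE {R : Type*} [Ring R] {n : ℕ} (C : Matrix (Fin (n+1)) (Fin (n+1)) R)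
    (v : Fin (n+1) → R) : R :=
  ∑ π : Equiv.Perm (Fin (n+1)),
    (Equiv.Perm.sign π : ℤ) •
      (((List.finRange n).map fun k => C (π k.castSucc) k.castSucc).prod * v (π (Fin.last n)))

theorem auxE_col {R : Type*} [Ring R] {n : ℕ} (C : Matrix (Fin (n+1)) (Fin (n+1)) R)
    (k : Fin (n+1)) :
    auxE C (fun i => C i k) = auxD C (Fin.snoc (α := fun _ => Fin (n+1)) Fin.castSucc k) := by
  unfold auxE auxD
  simp [List.finRange_succ_last, Function.comp_def]

theorem auxD_id {R : Type*} [Ring R] {n : ℕ} (C : Matrix (Fin (n+1)) (Fin (n+1)) R) :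
    auxE C (fun i => C i (Fin.last n)) = cdet C := by
  unfold auxE cdet
  simp [List.finRange_succ_last, Function.comp_def]

theorem auxE_lin {R : Type*} [Ring R] {n : ℕ} (C : Matrix (Fin (n+1)) (Fin (n+1)) R)
    (b : Fin (n+1) → R) :
    auxE C (fun i => ∑ k, C i k * b k) = ∑ k, auxE C (fun i => C i k) * b k := by
  unfold auxE
  simp_rw [Finset.sum_mul, Finset.mul_sum, Finset.smul_sum]
  rw [Finset.sum_comm]
  simp [mul_assoc]

theorem aux_rem {α : Type*} (σ : Equiv.Perm (Option α)) (h : σ none = none) :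
    Equiv.optionCongr (Equiv.removeNone σ) = σ := by
  ext x : 1
  cases x with
  | none => simp [h]
  | some x =>
    have hx : ∃ y, σ (some x) = some y := by
      rw [← Option.ne_none_iff_exists']
      intro hh
      rw [← h] at hh
      simpa using σ.injective hh
    simpa using Equiv.removeNone_some σ hx

theorem auxE_last {R : Type*} [Ring R] {n : ℕ} (C : Matrix (Fin (n+1)) (Fin (n+1)) R)
    (v : Fin (n+1) → R) (hv : v (Fin.last n) = 1) (hv' : ∀ i, i ≠ Fin.last n → v i = 0) :
    auxE C v =
      ∑ π : Equiv.Perm (Fin n), (Equiv.Perm.sign π : ℤ) •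
      ((List.finRange n).map fun k => C (π k).castSucc k.castSucc).prod := by
  unfold auxE
  symm
  refine Finset.sum_of_injOn
    (fun σ => (finSuccEquivLast (n := n)).symm.permCongr (Equiv.optionCongr σ)) ?_ (by simp) ?_ ?_
  · intro σ _ τ _ h
    have := (Equiv.permCongr (finSuccEquivLast (n := n)).symm).injective h
    exact Equiv.optionCongr_injective this
  · intro π _ hπ
    have : π (Fin.last n) ≠ Fin.last n := by
      intro hl
      apply hπ
      refine ⟨Equiv.removeNone ((finSuccEquivLast (n := n)).permCongr π), by simp, ?_⟩
      have : Equiv.optionCongr (Equiv.removeNone ((finSuccEquivLast (n := n)).permCongr π))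
          = (finSuccEquivLast (n := n)).permCongr π := by
        have hn : (finSuccEquivLast (n := n)).permCongr π none = none := by
          simp [Equiv.permCongr_apply, hl]
        rw [aux_rem _ hn]
      simp only [this]
      ext x
      simp [Equiv.permCongr_apply]
    simp [hv' _ this]
  · intro σ _
    have hl : (finSuccEquivLast (n := n)).symm.permCongr (Equiv.optionCongr σ) (Fin.last n) = Fin.last n := by
      rw [Equiv.permCongr_apply]
      simp
    rw [hl, hv]
    simp [Equiv.permCongr_apply, Equiv.Perm.sign_permCongr, Equiv.optionCongr_sign]

theorem aux_sub {R : Type*} [Ring R] {n : ℕ} (C : Matrix (Fin (n+1)) (Fin (n+1)) R)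
    (N : ℕ) (hN : N = n) (S : Finset (Fin (n+1))) (hS : S = Finset.univ.erase (Fin.last n))
    (h h' : S.card = N) :
    ∑ π : Equiv.Perm (Fin N),
      (Equiv.Perm.sign π : ℤ) •
        ((List.finRange N).map fun k =>
          C ((S.orderIsoOfFin h (π k) : Fin (n+1))) ((S.orderIsoOfFin h' k : Fin (n+1)))).prod =
      ∑ π : Equiv.Perm (Fin n), (Equiv.Perm.sign π : ℤ) •
      ((List.finRange n).map fun k => C (π k).castSucc k.castSucc).prod := by
  subst hN
  have : (Fin.castSucc : Fin N → Fin (N+1)) = S.orderEmbOfFin h :=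
    Finset.orderEmbOfFin_unique h (fun x => by simp [hS, Fin.castSucc_ne_last]) Fin.strictMono_castSucc
  simp [this]

theorem partial_rightQuantum_matrix_inverse_last_entry (hm : 1 ≤ m)
    (A : Matrix (Fin m) (Fin m) R)
    (h₁ : ∀ i j k : Fin m, (k : ℕ) ≠ m - 1 → A j k * A i k = A i k * A j k)
    (h₂ : ∀ i j k l : Fin m, k ≠ l → (k : ℕ) ≠ m - 1 → (l : ℕ) ≠ m - 1 →
      A i k * A j l - A j k * A i l = A j l * A i k - A i l * A j k)
    (B : Matrix (Fin m) (Fin m) R) (hB₁ : (1 - A) * B = 1) (hB₂ : B * (1 - A) = 1) :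
    cdet (1 - A) * B ⟨m - 1, by omega⟩ ⟨m - 1, by omega⟩ =
      cdetSub (1 - A) (Finset.univ.erase ⟨m - 1, by omega⟩)
        (Finset.univ.erase ⟨m - 1, by omega⟩) := by
  obtain ⟨n, rfl⟩ : ∃ n, m = n + 1 := ⟨m - 1, by omega⟩
  have hlast : (⟨n + 1 - 1, by omega⟩ : Fin (n+1)) = Fin.last n := by ext; simp
  rw [hlast]
  have hr : cdetSub (1 - A) (Finset.univ.erase (Fin.last n)) (Finset.univ.erase (Fin.last n)) =
      auxE (1 - A) (fun i => (1 : Matrix (Fin (n+1)) (Fin (n+1)) R) i (Fin.last n)) := by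
    rw [auxE_last (1 - A) (fun i => (1 : Matrix (Fin (n+1)) (Fin (n+1)) R) i (Fin.last n))
      (Matrix.one_apply_eq _) (fun i hi => Matrix.one_apply_ne hi), cdetSub,
      dif_pos rfl]
    exact aux_sub (1 - A) _ (by simp) _ rfl rfl rfl
  have comm1 : ∀ a b x y : R, (∃ s : ℤ, x = (s : R)) → (∃ s : ℤ, y = (s : R)) →
      (x - a) * (y - b) - (y - b) * (x - a) = a * b - b * a := by
    rintro a b _ _ ⟨s, rfl⟩ ⟨t, rfl⟩
    have e1 := (Int.cast_commute s b).eq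
    have e2 := (Int.cast_commute t a).eq
    have e3 := (Int.cast_commute s (t : R)).eq
    simp only [mul_sub, sub_mul, e1, e2, e3]
    abel
  have one_int : ∀ i j, ∃ s : ℤ, (1 : Matrix (Fin (n+1)) (Fin (n+1)) R) i j = (s : R) := by
    intro i j
    by_cases h : i = j
    · exact ⟨1, by rw [h, Matrix.one_apply_eq]; simp⟩
    · exact ⟨0, by rw [Matrix.one_apply_ne h]; simp⟩
  have comm : ∀ i k j l, (1 - A) i k * (1 - A) j l - (1 - A) j l * (1 - A) i k
      = A i k * A j l - A j l * A i k := by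
    intro i k j l
    exact comm1 _ _ _ _ (one_int _ _) (one_int _ _)
  have c₁ : ∀ i j k : Fin (n+1), k ≠ Fin.last n →
      (1 - A) j k * (1 - A) i k = (1 - A) i k * (1 - A) j k := by
    intro i j k hk
    rw [← sub_eq_zero, comm, sub_eq_zero]
    exact h₁ i j k (fun h => hk (by ext; simpa using h))
  have c₂ : ∀ i j k l : Fin (n+1), k ≠ Fin.last n → l ≠ Fin.last n →
      (1 - A) i k * (1 - A) j l - (1 - A) j k * (1 - A) i l =
        (1 - A) j l * (1 - A) i k - (1 - A) i l * (1 - A) j k := by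
    intro i j k l hk hl
    by_cases hkl : k = l
    · subst hkl
      rw [c₁ i j k hk]
    · have := h₂ i j k l hkl (fun h => hk (by ext; simpa using h)) (fun h => hl (by ext; simpa using h))
      have e1 := comm i k j l
      have e2 := comm j k i l
      rw [sub_eq_sub_iff_sub_eq_sub, e1, e2, ← sub_eq_sub_iff_sub_eq_sub]
      exact this
  have hv : (fun i => (1 : Matrix (Fin (n+1)) (Fin (n+1)) R) i (Fin.last n)) =
      fun i => ∑ k, (1 - A) i k * B k (Fin.last n) := by
    funext i
    rw [← Matrix.mul_apply, hB₁]
  rw [hr, hv, auxE_lin, Fin.sum_univ_castSucc, auxD_id, Finset.sum_eq_zero, zero_add]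
  intro k _
  rw [auxE_col, auxD_rep (1 - A) (fun k => k ≠ Fin.last n) c₁ c₂ (n - 1 - k) _ k.castSucc (Fin.last n),
    zero_mul]
  · intro x
    refine Fin.lastCases ?_ (fun y => ?_) x
    · simp [Fin.castSucc_ne_last]
    · simp [Fin.castSucc_ne_last]
  · simp; omega
  · simp
end

section
/- For every integer m ≥ 1: Σ_{i=1}^{2m−1} (−1)^i · C(2m, i−1) · C(2m, i) · C(2m, i+1) = 2·(−1)^m · C(2m, m−1) · C(3m, m−1); and for every odd integer n ≥ 1: Σ_{i=1}^{n−1} (−1)^i · C(n, i−1) · C(n, i) · C(n, i+1) = 0. Here C(a,b) denotes the binomial coefficient and the sums are taken in ℤ. -/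
def invF (j : ℤ) : ℚ := if j < 0 then 0 else 1 / (j.toNat.factorial : ℚ)

lemma invF_nat (n : ℕ) : invF n = 1 / (n.factorial : ℚ) := by
  simp [invF]

lemma invF_neg (j : ℤ) (h : j < 0) : invF j = 0 := by
  simp [invF, h]

lemma invF_step (j : ℤ) : invF j = (j + 1) * invF (j + 1) := by
  rcases lt_trichotomy j (-1) with h | h | h
  · rw [invF_neg _ (by omega), invF_neg _ (by omega)]; simp
  · subst h; simp [invF]
  · obtain ⟨n, rfl⟩ := Int.eq_ofNat_of_zero_le (show 0 ≤ j by omega)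
    have := invF_nat (n + 1)
    push_cast at this
    rw [this, invF_nat, Nat.factorial_succ]
    push_cast
    field_simp

lemma invF_step' (j l : ℤ) (h : l = j + 1) : invF j = l * invF l := by
  subst h; rw [invF_step j]; push_cast; rfl

def dixT (b c n k : ℤ) : ℚ :=
  invF (n + k) * invF (n - k) * invF (b + k) * invF (b - k) * invF (c + k) * invF (c - k)

def dixG (b c n k : ℤ) : ℚ :=
  -(1 / 2) * (invF (n + k) * invF (n + 1 - k) * invF (b + k - 1) * invF (b - k) *
    invF (c + k - 1) * invF (c - k))

lemma dix_rec (b c n k : ℤ) :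
    ((n : ℚ) + 1) * (n + b + 1) * (n + c + 1) * dixT b c (n + 1) k
      - (n + b + c + 1) * dixT b c n k = - dixG b c n (k + 1) - dixG b c n k := by
  unfold dixT dixG
  rw [invF_step' (n + k) (n + 1 + k) (by ring), invF_step' (n - k) (n + 1 - k) (by ring),
    invF_step' (b + k - 1) (b + k) (by ring), invF_step' (c + k - 1) (c + k) (by ring),
    show n + (k + 1) = n + 1 + k by ring, show n + 1 - (k + 1) = n - k by ring,
    show b + (k + 1) - 1 = b + k by ring, show c + (k + 1) - 1 = c + k by ring,
    invF_step' (n - k) (n + 1 - k) (by ring),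
    invF_step' (b - (k + 1)) (b - k) (by ring), invF_step' (c - (k + 1)) (c - k) (by ring)]
  push_cast
  ring

def dixS (M : ℕ) (b c n : ℤ) : ℚ :=
  ∑ i ∈ Finset.range (2 * M + 1), (-1 : ℚ) ^ i * dixT b c n ((i : ℤ) - M)

lemma dixS_rec (M : ℕ) (b c n : ℤ) (h : n < M) :
    ((n : ℚ) + 1) * (n + b + 1) * (n + c + 1) * dixS M b c (n + 1)
      = (n + b + c + 1) * dixS M b c n := by
  rw [← sub_eq_zero]
  unfold dixS
  rw [Finset.mul_sum, Finset.mul_sum, ← Finset.sum_sub_distrib]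
  have : ∀ i ∈ Finset.range (2 * M + 1),
      ((n : ℚ) + 1) * (n + b + 1) * (n + c + 1) * ((-1 : ℚ) ^ i * dixT b c (n + 1) ((i : ℤ) - M))
      - (n + b + c + 1) * ((-1 : ℚ) ^ i * dixT b c n ((i : ℤ) - M))
      = (fun j : ℕ => (-1 : ℚ) ^ j * dixG b c n ((j : ℤ) - M)) (i + 1)
        - (fun j : ℕ => (-1 : ℚ) ^ j * dixG b c n ((j : ℤ) - M)) i := by
    intro i _
    have h := dix_rec b c n ((i : ℤ) - M)
    have e : (((i + 1 : ℕ) : ℤ) - M) = (i : ℤ) - M + 1 := by push_cast; ring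
    simp only [e, pow_succ]
    linear_combination (-1 : ℚ) ^ i * h
  rw [Finset.sum_congr rfl this,
    Finset.sum_range_sub (fun j : ℕ => (-1 : ℚ) ^ j * dixG b c n ((j : ℤ) - M))]
  have h1 : dixG b c n (((2 * M + 1 : ℕ) : ℤ) - M) = 0 := by
    unfold dixG
    rw [invF_neg (n + 1 - _) (by push_cast; omega)]; ring
  have h2 : dixG b c n (((0 : ℕ) : ℤ) - M) = 0 := by
    unfold dixG
    rw [invF_neg (n + _) (by push_cast; omega)]; ring
  simp only [h1, h2]; ring

lemma dixS_zero (M b c : ℕ) :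
    dixS M b c 0 = (-1) ^ M / ((b.factorial : ℚ) ^ 2 * (c.factorial : ℚ) ^ 2) := by
  unfold dixS
  rw [Finset.sum_eq_single M]
  · have h0 := invF_nat 0
    simp only [Nat.cast_zero] at h0
    simp only [dixT, sub_self, add_zero, sub_zero, invF_nat, h0]
    simp
    field_simp
  · intro i _ hi
    rcases lt_or_gt_of_ne hi with h | h
    · unfold dixT; rw [invF_neg (0 + _) (by omega)]; ring
    · unfold dixT; rw [invF_neg (0 - _) (by omega)]; ring
  · intro h; exact absurd (Finset.mem_range.2 (by omega)) h

lemma dixS_eq (M b c n : ℕ) (h : n ≤ M) :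
    dixS M b c n = (-1) ^ M * ((n + b + c).factorial : ℚ) /
      (n.factorial * b.factorial * c.factorial * (n + b).factorial * (n + c).factorial *
        (b + c).factorial) := by
  induction n with
  | zero =>
    have := dixS_zero M b c
    simp only [Nat.cast_zero, this, zero_add, Nat.factorial_zero]
    field_simp
    simp
  | succ n ih =>
    have ih := ih (by omega)
    have hr := dixS_rec M b c n (by omega)
    rw [ih] at hr
    push_cast at hr ⊢
    have hp : ((n : ℚ) + 1) * (n + b + 1) * (n + c + 1) ≠ 0 := by positivity
    apply mul_left_cancel₀ hp
    rw [hr, show n + 1 + b + c = (n + b + c) + 1 by ring, show n + 1 + b = (n + b) + 1 by ring,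
      show n + 1 + c = (n + c) + 1 by ring]
    simp only [Nat.factorial_succ]
    push_cast
    field_simp

lemma even_case (M : ℕ) :
    ∑ i ∈ Finset.range (2 * M + 1),
        (-1 : ℚ) ^ (i + 1) * (2 * (M + 1)).choose i * (2 * (M + 1)).choose (i + 1) *
          (2 * (M + 1)).choose (i + 2) =
      2 * (-1 : ℚ) ^ (M + 1) * (2 * (M + 1)).choose M * (3 * (M + 1)).choose M := by
  have h := dixS_eq M (M + 1) (M + 2) M le_rfl
  have key : ∑ i ∈ Finset.range (2 * M + 1),
        (-1 : ℚ) ^ (i + 1) * (2 * (M + 1)).choose i * (2 * (M + 1)).choose (i + 1) *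
          (2 * (M + 1)).choose (i + 2) =
      - ((2 * (M + 1)).factorial : ℚ) ^ 3 * dixS M (M + 1 : ℕ) (M + 2 : ℕ) M := by
    unfold dixS
    rw [Finset.mul_sum]
    apply Finset.sum_congr rfl
    intro i hi
    obtain ⟨j, hj⟩ := Nat.exists_eq_add_of_le (Nat.lt_succ_iff.1 (Finset.mem_range.1 hi))
    rw [show 2 * (M + 1) = i + j + 2 by omega]
    rw [Nat.cast_choose ℚ (show i ≤ i + j + 2 by omega),
      Nat.cast_choose ℚ (show i + 1 ≤ i + j + 2 by omega),
      Nat.cast_choose ℚ (show i + 2 ≤ i + j + 2 by omega),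
      show i + j + 2 - i = j + 2 by omega, show i + j + 2 - (i + 1) = j + 1 by omega,
      show i + j + 2 - (i + 2) = j by omega]
    unfold dixT
    rw [show (M : ℤ) + (i - M) = (i : ℕ) by omega,
      show (M : ℤ) - (i - M) = (j : ℕ) by omega,
      show ((M + 1 : ℕ) : ℤ) + (i - M) = (i + 1 : ℕ) by omega,
      show ((M + 1 : ℕ) : ℤ) - (i - M) = (j + 1 : ℕ) by omega,
      show ((M + 2 : ℕ) : ℤ) + (i - M) = (i + 2 : ℕ) by omega,
      show ((M + 2 : ℕ) : ℤ) - (i - M) = (j + 2 : ℕ) by omega]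
    simp only [invF_nat, pow_succ]
    field_simp
  rw [key, h, Nat.cast_choose ℚ (show M ≤ 2 * (M + 1) by omega),
    Nat.cast_choose ℚ (show M ≤ 3 * (M + 1) by omega),
    show 2 * (M + 1) - M = M + 2 by omega, show 3 * (M + 1) - M = 2 * M + 1 + 1 + 1 by omega,
    show M + (M + 1) + (M + 2) = 3 * (M + 1) by omega,
    show M + (M + 1) = 2 * M + 1 by omega, show M + (M + 2) = 2 * M + 1 + 1 by omega,
    show M + 1 + (M + 2) = 2 * M + 1 + 1 + 1 by omega,
    show 2 * (M + 1) = 2 * M + 1 + 1 by omega]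
  simp only [Nat.factorial_succ, pow_succ]
  push_cast
  field_simp
  ring

theorem dixon_style_identity :
    (∀ m : ℕ, 1 ≤ m →
      ∑ i ∈ Finset.Icc 1 (2 * m - 1),
        (-1 : ℤ) ^ i * (2 * m).choose (i - 1) * (2 * m).choose i * (2 * m).choose (i + 1) =
      2 * (-1 : ℤ) ^ m * (2 * m).choose (m - 1) * (3 * m).choose (m - 1)) ∧
    (∀ n : ℕ, 1 ≤ n → Odd n →
      ∑ i ∈ Finset.Icc 1 (n - 1),
        (-1 : ℤ) ^ i * n.choose (i - 1) * n.choose i * n.choose (i + 1) = 0) := by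
  constructor
  · intro m hm
    obtain ⟨M, rfl⟩ := Nat.exists_eq_add_of_le' hm
    have h := even_case M
    rw [← Finset.Ico_succ_right_eq_Icc, Finset.sum_Ico_eq_sum_range,
      show Order.succ (2 * (M + 1) - 1) - 1 = 2 * M + 1 by simp; omega]
    simp only [Nat.add_sub_cancel_left, Nat.add_sub_cancel, add_comm 1]
    exact_mod_cast h
  · intro n hn ho
    have : ∑ i ∈ Finset.Icc 1 (n - 1),
        (-1 : ℤ) ^ i * n.choose (i - 1) * n.choose i * n.choose (i + 1) =
      ∑ i ∈ Finset.Icc 1 (n - 1),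
        -((-1 : ℤ) ^ i * n.choose (i - 1) * n.choose i * n.choose (i + 1)) := by
      apply Finset.sum_bij' (fun i _ => n - i) (fun i _ => n - i)
      · intro i hi; simp only [Finset.mem_Icc] at *; omega
      · intro i hi; simp only [Finset.mem_Icc] at *; omega
      · intro i hi; simp only [Finset.mem_Icc] at *; omega
      · intro i hi; simp only [Finset.mem_Icc] at *; omega
      · intro i hi
        simp only [Finset.mem_Icc] at hi
        have e1 : n.choose (n - i - 1) = n.choose (i + 1) :=
          Nat.choose_symm_of_eq_add (by omega)
        have e2 : n.choose (n - i) = n.choose i := Nat.choose_symm (by omega)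
        have e3 : n.choose (n - i + 1) = n.choose (i - 1) :=
          Nat.choose_symm_of_eq_add (by omega)
        have e4 : (-1 : ℤ) ^ (n - i) = -(-1) ^ i := by
          have h1 : (-1 : ℤ) ^ (n - i) * (-1) ^ i = -1 := by
            rw [← pow_add, Nat.sub_add_cancel (by omega), ho.neg_one_pow]
          have h2 : (-1 : ℤ) ^ i * (-1) ^ i = 1 := by
            rw [← mul_pow]; simp
          linear_combination (-1 : ℤ) ^ i * h1 - (-1 : ℤ) ^ (n - i) * h2
        rw [e1, e2, e3, e4]; ring
    rw [Finset.sum_neg_distrib] at this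
    linarith
end

section
/- For every integer k ≥ 0 and every odd positive integer n: Σ_{i=k}^{n−k} (−1)^i · C(n, i−k) · C(n, i) · C(n, i+k) = 0, where C(a,b) denotes the binomial coefficient (equal to 0 when b > a) and the sum is taken in ℤ (and is empty if k > n−k). -/
theorem odd_sum_vanishes (k n : ℕ) (hn : 1 ≤ n) (hodd : Odd n) :
    ∑ i ∈ Finset.Icc k (n - k),
      (-1 : ℤ) ^ i * n.choose (i - k) * n.choose i * n.choose (i + k) = 0 := by
  refine Finset.sum_involution (fun i _ => n - i) ?_ ?_ ?_ ?_
  · intro i hi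
    rw [Finset.mem_Icc] at hi
    have h1 : n.choose (n - i - k) = n.choose (i + k) := by
      rw [← Nat.choose_symm (show i + k ≤ n by omega)]
      congr 1
      omega
    have h2 : n.choose (n - i) = n.choose i := Nat.choose_symm (by omega)
    have h3 : n.choose (n - i + k) = n.choose (i - k) := by
      rw [← Nat.choose_symm (show i - k ≤ n by omega)]
      congr 1
      omega
    have h4 : (-1 : ℤ) ^ (n - i) = -(-1) ^ i := by
      rcases Nat.even_or_odd i with h | h
      · rw [h.neg_one_pow, (Nat.Odd.sub_even (by omega) hodd h).neg_one_pow]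
      · rw [h.neg_one_pow, (Nat.Odd.sub_odd hodd h).neg_one_pow]
        norm_num
    simp only [h1, h2, h3, h4]
    ring
  · intro i hi _ h
    rw [Finset.mem_Icc] at hi
    obtain ⟨m, hm⟩ := hodd
    omega
  · intro i hi
    rw [Finset.mem_Icc] at hi ⊢
    omega
  · intro i hi
    rw [Finset.mem_Icc] at hi
    omega
end

section
/- For all integers m ≥ 1 and k with 0 ≤ k ≤ m: Σ_{i=k}^{2m−k} (−1)^i · C(2m, i−k) · C(2m, i) · C(2m, i+k) = (−1)^m · (2m)!² · (3m)! / ( m! · (m−k)! · (m+k)! · (2m−k)! · (2m+k)! ), where C(a,b) denotes the binomial coefficient and the sum is taken in ℤ; equivalently, the product of the left-hand side with m!·(m−k)!·(m+k)!·(2m−k)!·(2m+k)! equals (−1)^m·(2m)!²·(3m)!. -/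
/-- Reciprocal factorial on the integers, zero at negative integers. -/
def rf (n : ℤ) : ℚ := if n < 0 then 0 else 1 / (n.toNat.factorial : ℚ)

lemma rf_neg {n : ℤ} (h : n < 0) : rf n = 0 := by simp [rf, h]

lemma rf_nat (n : ℕ) : rf (n : ℤ) = 1 / (n.factorial : ℚ) := by simp [rf]

lemma rf_step (n : ℤ) : rf (n - 1) = n * rf n := by
  rcases lt_trichotomy n 0 with h | h | h
  · rw [rf_neg h, rf_neg (by omega)]; simp
  · subst h; rw [rf_neg (by omega)]; simp
  · obtain ⟨k, rfl⟩ : ∃ k : ℕ, n = ((k + 1 : ℕ) : ℤ) := ⟨n.toNat - 1, by omega⟩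
    have : (((k + 1 : ℕ) : ℤ) - 1) = (k : ℤ) := by push_cast; ring
    rw [this, rf_nat, rf_nat, Nat.factorial_succ]
    have := Nat.factorial_ne_zero k
    push_cast
    field_simp

def TT (a b c j : ℤ) : ℚ := rf (a+j) * rf (a-j) * rf (b+j) * rf (b-j) * rf (c+j) * rf (c-j)

def GG (a b c j : ℤ) : ℚ :=
  rf (a+j) * rf (a+1-j) * rf (b+j-1) * rf (b-j) * rf (c+j-1) * rf (c-j)

lemma TG (a b c j : ℤ) :
    2 * (((a:ℚ)+1)*(a+b+1)*(a+c+1) * TT (a+1) b c j - (a+b+c+1) * TT a b c j)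
      = GG a b c (j+1) + GG a b c j := by
  unfold TT GG
  have e1 : rf (a+j) = (a+1+j) * rf (a+1+j) := by
    have := rf_step (a+1+j); push_cast at this; rw [← this]; congr 1; ring
  have e2 : rf (a-j) = (a+1-j) * rf (a+1-j) := by
    have := rf_step (a+1-j); push_cast at this; rw [← this]; congr 1; ring
  have e3 : rf (b+j-1) = (b+j) * rf (b+j) := by
    have := rf_step (b+j); push_cast at this; exact this
  have e4 : rf (c+j-1) = (c+j) * rf (c+j) := by
    have := rf_step (c+j); push_cast at this; exact this
  have e5 : rf (b-(j+1)) = (b-j) * rf (b-j) := by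
    have := rf_step (b-j); push_cast at this; rw [← this]; congr 1; ring
  have e6 : rf (c-(j+1)) = (c-j) * rf (c-j) := by
    have := rf_step (c-j); push_cast at this; rw [← this]; congr 1; ring
  have i1 : a+(j+1) = a+1+j := by ring
  have i2 : a+1-(j+1) = a-j := by ring
  have i3 : b+(j+1)-1 = b+j := by ring
  have i4 : c+(j+1)-1 = c+j := by ring
  rw [i1, i2, i3, i4, e1, e2, e3, e4, e5, e6]
  ring

lemma tele (g : ℕ → ℚ) (n : ℕ) :
    ∑ i ∈ Finset.range n, (-1:ℚ)^i * (g (i+1) + g i) = g 0 - (-1)^n * g n := by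
  induction n with
  | zero => simp
  | succ n ih => rw [Finset.sum_range_succ, ih]; ring

lemma dixon (b c N : ℕ) : ∀ a : ℕ, a ≤ N →
    (∑ i ∈ Finset.range (2*N+1), (-1:ℚ)^i * TT a b c ((i:ℤ) - N)) *
      (a.factorial * b.factorial * c.factorial * (a+b).factorial * (b+c).factorial
        * (a+c).factorial) = (-1)^N * (a+b+c).factorial := by
  intro a
  induction a with
  | zero =>
    intro _
    rw [Finset.sum_eq_single N]
    · have := rf_nat 0
      simp only [TT, sub_self, add_zero, sub_zero, rf_nat]
      have := Nat.factorial_ne_zero b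
      have := Nat.factorial_ne_zero c
      simp
      field_simp
    · intro i _ hi
      have : (i:ℤ) - N < 0 ∨ -((i:ℤ) - N) < 0 := by omega
      rcases this with h | h
      · simp [TT, rf_neg h]
      · have h' : ((0:ℕ):ℤ) - ((i:ℤ) - N) < 0 := by push_cast; omega
        rw [TT, rf_neg h']; simp
    · intro h; simp at h; omega
  | succ a ih =>
    intro ha
    have ih := ih (by omega)
    have key : ((a:ℚ)+1)*(a+b+1)*(a+c+1) *
        (∑ i ∈ Finset.range (2*N+1), (-1:ℚ)^i * TT (a+1:ℕ) b c ((i:ℤ) - N))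
        = (a+b+c+1) * ∑ i ∈ Finset.range (2*N+1), (-1:ℚ)^i * TT a b c ((i:ℤ) - N) := by
      have t := tele (fun i => GG a b c ((i:ℤ) - N)) (2*N+1)
      have z0 : GG a b c (((0:ℕ):ℤ) - N) = 0 := by
        have : (a:ℤ) + (((0:ℕ):ℤ) - N) < 0 := by push_cast; omega
        rw [GG, rf_neg this]; simp
      have z1 : GG a b c (((2*N+1:ℕ):ℤ) - N) = 0 := by
        have : (a:ℤ) + 1 - (((2*N+1:ℕ):ℤ) - N) < 0 := by push_cast; omega
        rw [GG, rf_neg this]; simp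
      simp only [z0, z1, mul_zero, sub_zero] at t
      rw [← sub_eq_zero, Finset.mul_sum, Finset.mul_sum, ← Finset.sum_sub_distrib]
      have : (2:ℚ) ≠ 0 := by norm_num
      apply mul_left_cancel₀ this
      rw [mul_zero, ← t, Finset.mul_sum]
      apply Finset.sum_congr rfl
      intro i _
      have h := TG a b c ((i:ℤ) - N)
      have e : ((i + 1 : ℕ):ℤ) - N = (i:ℤ) - N + 1 := by push_cast; ring
      rw [e, ← h]
      push_cast
      ring
    have f1 : (a+1+b).factorial = (a+b+1) * (a+b).factorial := by
      rw [← Nat.factorial_succ]; congr 1; ring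
    have f2 : (a+1+c).factorial = (a+c+1) * (a+c).factorial := by
      rw [← Nat.factorial_succ]; congr 1; ring
    have f3 : (a+1+b+c).factorial = (a+b+c+1) * (a+b+c).factorial := by
      rw [← Nat.factorial_succ]; congr 1; ring
    rw [f1, f2, f3, Nat.factorial_succ]
    push_cast at key ⊢
    linear_combination ((a.factorial * b.factorial * c.factorial * (a+b).factorial
      * (b+c).factorial * (a+c).factorial : ℚ)) * key + ((a:ℚ)+b+c+1) * ih

lemma choose_rf (n i : ℕ) : (n.choose i : ℚ) = n.factorial * rf i * rf ((n:ℤ) - i) := by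
  by_cases h : i ≤ n
  · have e : (n:ℤ) - i = ((n - i : ℕ) : ℤ) := by omega
    rw [e, rf_nat, rf_nat, Nat.cast_choose ℚ h]
    field_simp
  · rw [Nat.choose_eq_zero_of_lt (by omega), rf_neg (n := (n:ℤ) - i) (by omega)]; simp

theorem genmm2_identity (m k : ℕ) (hm : 1 ≤ m) (hkm : k ≤ m) :
    (∑ i ∈ Finset.Icc k (2 * m - k),
        (-1 : ℤ) ^ i * (2 * m).choose (i - k) * (2 * m).choose i * (2 * m).choose (i + k)) *
      ((m.factorial : ℤ) * (m - k).factorial * (m + k).factorial *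
        (2 * m - k).factorial * (2 * m + k).factorial) =
    (-1 : ℤ) ^ m * ((2 * m).factorial : ℤ) ^ 2 * (3 * m).factorial := by
  have d := dixon m (m+k) m (m-k) (by omega)
  have s : ∑ i ∈ Finset.Icc k (2 * m - k),
        (-1 : ℚ) ^ i * (2 * m).choose (i - k) * (2 * m).choose i * (2 * m).choose (i + k)
      = ((2*m).factorial : ℚ)^3 * ∑ i ∈ Finset.range (2*m+1),
        (-1:ℚ)^i * TT (m-k:ℕ) m (m+k:ℕ) ((i:ℤ) - m) := by
    rw [Finset.mul_sum]
    have sub : Finset.Icc k (2*m-k) ⊆ Finset.range (2*m+1) := by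
      intro i hi; simp at hi ⊢; omega
    rw [← Finset.sum_subset sub]
    · apply Finset.sum_congr rfl
      intro i hi
      simp only [Finset.mem_Icc] at hi
      rw [choose_rf, choose_rf, choose_rf, TT]
      have a1 : ((m-k:ℕ):ℤ) + ((i:ℤ) - m) = ((i-k:ℕ):ℤ) := by omega
      have a2 : ((m-k:ℕ):ℤ) - ((i:ℤ) - m) = ((2*m:ℕ):ℤ) - ((i+k:ℕ):ℤ) := by omega
      have a3 : (m:ℤ) + ((i:ℤ) - m) = (i:ℤ) := by omega
      have a4 : (m:ℤ) - ((i:ℤ) - m) = ((2*m:ℕ):ℤ) - (i:ℤ) := by omega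
      have a5 : ((m+k:ℕ):ℤ) + ((i:ℤ) - m) = ((i+k:ℕ):ℤ) := by omega
      have a6 : ((m+k:ℕ):ℤ) - ((i:ℤ) - m) = ((2*m:ℕ):ℤ) - ((i-k:ℕ):ℤ) := by omega
      rw [a1, a2, a3, a4, a5, a6]
      ring
    · intro i _ hi
      simp only [Finset.mem_Icc] at hi
      have : ((m-k:ℕ):ℤ) + ((i:ℤ) - m) < 0 ∨ ((m-k:ℕ):ℤ) - ((i:ℤ) - m) < 0 := by omega
      rcases this with h | h <;> rw [TT, rf_neg h] <;> simp
  have e1 : m - k + m = 2*m-k := by omega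
  have e2 : m + (m+k) = 2*m+k := by omega
  have e3 : m - k + (m+k) = 2*m := by omega
  have e4 : 2*m-k + (m+k) = 3*m := by omega
  rw [e1, e2, e3, e4] at d
  have q : ((2*m).factorial : ℚ) ≠ 0 := by exact_mod_cast Nat.factorial_ne_zero _
  have : (∑ i ∈ Finset.Icc k (2 * m - k),
        (-1 : ℚ) ^ i * (2 * m).choose (i - k) * (2 * m).choose i * (2 * m).choose (i + k)) *
      ((m.factorial : ℚ) * (m - k).factorial * (m + k).factorial *
        (2 * m - k).factorial * (2 * m + k).factorial) =
    (-1 : ℚ) ^ m * ((2 * m).factorial : ℚ) ^ 2 * (3 * m).factorial := by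
    rw [s]
    linear_combination ((2*m).factorial : ℚ)^2 * d
  exact_mod_cast this
end
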